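/- arXiv:2511.02974 — 2 statements merged into one kernel-verified Lean document; each statement's English description precedes it below -/
import Mathlib

section
/- There is an absolute constant c > 0 with the following property. Let K be a convex body in ℝ^n with 0 in its interior such that the barycenter of the polar body K° is at the origin (equivalently, the Santaló point of K is at the origin). Then vol_n(K ∩ (−K)) ≥ c^n · vol_n(K). -/
open MeasureTheory Metric Set
open scoped ENNReal RealInnerProductSpace Pointwise

noncomputable section

/-- The polar body of `K`. -/
def polarBody {n : ℕ} (K : Set (EuclideanSpace ℝ (Fin n))) : Set (EuclideanSpace ℝ (Fin n)) :=
  {x | ∀ y ∈ K, ⟪x, y⟫ ≤ 1}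

theorem det_hasDerivAt {ι : Type*} [Fintype ι] [DecidableEq ι]
    (M : ℝ → Matrix ι ι ℂ) (M' : Matrix ι ι ℂ) (s0 : ℝ)
    (h : ∀ k j, HasDerivAt (fun s => M s k j) (M' k j) s0) :
    HasDerivAt (fun s => (M s).det) (∑ k, ((M s0).updateRow k (M' k)).det) s0 := by
  have e : ∀ A : Matrix ι ι ℂ, A.det = ∑ σ : Equiv.Perm ι, (Equiv.Perm.sign σ : ℂ) * ∏ i, A i (σ i) := by
    intro A
    rw [← Matrix.det_transpose, Matrix.det_apply']
    rfl
  simp only [e]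
  rw [Finset.sum_comm]
  refine HasDerivAt.fun_sum fun σ _ => ?_
  rw [← Finset.mul_sum]
  refine HasDerivAt.const_mul _ ?_
  have := HasDerivAt.fun_finsetProd (u := Finset.univ) (f := fun i s => M s i (σ i))
    (f' := fun i => M' i (σ i)) (x := s0) (fun i _ => h i (σ i))
  convert! this using 1
  refine Finset.sum_congr rfl fun k _ => ?_
  rw [← Finset.prod_erase_mul _ _ (Finset.mem_univ k)]
  simp only [Matrix.updateRow_self, smul_eq_mul]
  congr 1
  refine Finset.prod_congr rfl fun i hi => ?_
  rw [Matrix.updateRow_ne (Finset.ne_of_mem_erase hi)]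

theorem det_updateRow_expand {ι : Type*} [Fintype ι] [DecidableEq ι]
    (M : Matrix ι ι ℂ) (k : ι) (v : ι → ℂ) :
    (M.updateRow k v).det = ∑ j, v j * (M.updateRow k (Pi.single j 1)).det := by
  have : v = ∑ j, v j • (Pi.single j 1 : ι → ℂ) := by
    ext i; simp [Finset.sum_apply, Pi.single_apply]
  conv_lhs => rw [this]
  have := (Matrix.detRowAlternating (R := ℂ) (n := ι)).toMultilinearMap.map_update_sum
    (t := Finset.univ) k (fun j => v j • (Pi.single j 1 : ι → ℂ)) M
  refine this.trans (Finset.sum_congr rfl fun j _ => ?_)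
  exact Matrix.det_updateRow_smul M k (v j) _

theorem piola_alg {ι : Type*} [Fintype ι] [DecidableEq ι]
    (M : Matrix ι ι ℂ) (c : ι → ι → ι → ℂ) (hc : ∀ j m l, c j m l = c l m j) (k : ι) :
    ∑ j, ∑ m, ((M.updateRow k (Pi.single j 1)).updateRow m (if m = k then 0 else c j m)).det = 0 := by
  rw [Finset.sum_comm]
  refine Finset.sum_eq_zero fun m _ => ?_
  by_cases hm : m = k
  · refine Finset.sum_eq_zero fun j _ => ?_
    rw [if_pos hm]
    exact Matrix.det_eq_zero_of_row_eq_zero m (by intro i; simp)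
  simp only [if_neg hm]
  set d : ι → ι → ℂ := fun j l =>
    ((M.updateRow k (Pi.single j 1)).updateRow m (Pi.single l 1)).det with hd
  have hanti : ∀ j l, d j l = - d l j := by
    intro j l
    have h1 : ((M.updateRow k (Pi.single j 1)).updateRow m (Pi.single l 1)) =
      ((M.updateRow k (Pi.single l 1)).updateRow m (Pi.single j 1)).submatrix (Equiv.swap m k) id := by
      ext a b
      simp only [Matrix.submatrix_apply, id, Matrix.updateRow_apply]
      by_cases h1 : a = m
      · subst h1; simp [Ne.symm hm]
      by_cases h2 : a = k
      · subst h2; simp [h1]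
      rw [Equiv.swap_apply_of_ne_of_ne h1 h2]
      simp [h1, h2]
    rw [hd]; simp only
    rw [h1, Matrix.det_permute]
    simp [Equiv.Perm.sign_swap hm]
  have h2 : ∑ j, ∑ l, c j m l * d j l = 0 := by
    have h3 : ∑ j, ∑ l, c j m l * d j l = - ∑ j, ∑ l, c j m l * d j l := by
      conv_lhs => rw [Finset.sum_comm]
      rw [← Finset.sum_neg_distrib]
      refine Finset.sum_congr rfl fun j _ => ?_
      rw [← Finset.sum_neg_distrib]
      refine Finset.sum_congr rfl fun l _ => ?_
      rw [hc, hanti]; ring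
    exact self_eq_neg.1 h3
  rw [← h2]
  refine Finset.sum_congr rfl fun j _ => ?_
  rw [det_updateRow_expand]

theorem integral_lineDeriv_zero {X : Type*} [NormedAddCommGroup X] [NormedSpace ℝ X]
    [FiniteDimensional ℝ X] [MeasurableSpace X] [BorelSpace X] (μ : Measure X) [μ.IsAddHaarMeasure]
    (g g' : X → ℂ) (v : X) (hg : ∀ x, HasLineDerivAt ℝ g (g' x) x v)
    (h1 : Integrable g μ) (h2 : Integrable g' μ) : ∫ x, g' x ∂μ = 0 := by
  have := integral_bilinear_hasLineDerivAt_right_eq_neg_left_of_integrable (μ := μ)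
    (f := fun _ => (1:ℂ)) (f' := fun _ => 0) (g := g) (g' := g') (v := v)
    (B := ContinuousLinearMap.mul ℝ ℂ) (by simp) (by simpa using h2) (by simpa using h1)
    (fun x _ => by simpa [HasLineDerivAt] using hasDerivAt_const (0:ℝ) (1:ℂ)) (fun x _ => hg x)
  simpa using this

theorem div_zero_abs {X : Type*} [NormedAddCommGroup X] [NormedSpace ℝ X]
    [FiniteDimensional ℝ X] [MeasurableSpace X] [BorelSpace X] (μ : Measure X) [μ.IsAddHaarMeasure]
    {ι : Type*} [Fintype ι] [DecidableEq ι] (v w : ι → X) (E : X → ℂ) (H : ι → X → ℂ)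
    (M : X → Matrix ι ι ℂ) (ζ : ι → X → ℂ) (N : X → Matrix ι ι ℂ)
    (E' : X → X → ℂ) (H' : X → ι → X → ℂ) (M' : X → X → Matrix ι ι ℂ)
    (dE : ∀ v x, HasLineDerivAt ℝ E (E' v x) x v)
    (dH : ∀ v k x, HasLineDerivAt ℝ (H k) (H' v k x) x v)
    (dM : ∀ v k j x, HasLineDerivAt ℝ (fun x => M x k j) (M' v x k j) x v)
    (hE : ∀ j x, E' (v j) x + Complex.I * E' (w j) x = -(∑ m, ζ m x * M x m j) * E x)
    (hH : ∀ j k x, H' (v j) k x + Complex.I * H' (w j) k x = N x k j)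
    (hM : ∀ j k l x, M' (v j) x k l + Complex.I * M' (w j) x k l =
      M' (v l) x k j + Complex.I * M' (w l) x k j)
    (i1 : ∀ j k, Integrable (fun x => E x * H k x * ((M x).updateRow k (Pi.single j 1)).det) μ)
    (i2 : ∀ v j k, Integrable (fun x => (E' v x * H k x + E x * H' v k x) *
       ((M x).updateRow k (Pi.single j 1)).det + E x * H k x *
       ∑ m, (((M x).updateRow k (Pi.single j 1)).updateRow m (if m = k then 0 else M' v x m)).det) μ) :
    ∫ x, E x * (-(∑ k, ζ k x * H k x) * (M x).det + ∑ k, ((M x).updateRow k (N x k)).det) ∂μ = 0 := by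
  set g' : X → ι → ι → X → ℂ := fun v j k x => (E' v x * H k x + E x * H' v k x) *
       ((M x).updateRow k (Pi.single j 1)).det + E x * H k x *
       ∑ m, (((M x).updateRow k (Pi.single j 1)).updateRow m (if m = k then 0 else M' v x m)).det with hg'
  have key : ∀ v j k, ∫ x, g' v j k x ∂μ = 0 := by
    intro v j k
    refine integral_lineDeriv_zero μ _ _ v ?_ (i1 j k) (i2 v j k)
    intro x
    have h1 := HasDerivAt.mul (HasDerivAt.mul (dE v x) (dH v k x))
      (det_hasDerivAt (fun s : ℝ => (M (x + s • v)).updateRow k (Pi.single j 1))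
        (fun m => if m = k then 0 else M' v x m) 0 (by
        intro m l
        by_cases hm : m = k
        · subst hm; simpa using hasDerivAt_const (0:ℝ) _
        · have h2 := dM v m l x
          unfold HasLineDerivAt at h2
          simpa [Matrix.updateRow_ne hm, hm] using h2))
    unfold HasLineDerivAt
    convert! h1 using 1
    simp [hg']
  have : ∀ x, E x * (-(∑ k, ζ k x * H k x) * (M x).det + ∑ k, ((M x).updateRow k (N x k)).det) =
      ∑ k, ∑ j, (g' (v j) j k x + Complex.I * g' (w j) j k x) := by
    intro x
    have hcr : ∀ k m, ∑ j, M x m j * ((M x).updateRow k (Pi.single j 1)).det = if m = k then (M x).det else 0 := by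
      intro k m
      rw [← det_updateRow_expand]
      split_ifs with h
      · subst h; simp [Matrix.updateRow_eq_self]
      · exact Matrix.det_zero_of_row_eq (i := m) (j := k) h (by ext; simp [Matrix.updateRow_ne h])
    have hk : ∀ k, ∑ j, (g' (v j) j k x + Complex.I * g' (w j) j k x) =
       E x * (-(ζ k x * H k x) * (M x).det + ((M x).updateRow k (N x k)).det) := by
      intro k
      have hp := piola_alg (M x) (fun j m l => M' (v j) x m l + Complex.I * M' (w j) x m l)
        (fun j m l => hM j m l x) k
      have hsplit : ∀ j m, ((((M x).updateRow k (Pi.single j 1)).updateRow m (if m = k then 0 else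
          fun l => M' (v j) x m l + Complex.I * M' (w j) x m l)).det) =
          (((M x).updateRow k (Pi.single j 1)).updateRow m (if m = k then 0 else M' (v j) x m)).det +
          Complex.I * (((M x).updateRow k (Pi.single j 1)).updateRow m (if m = k then 0 else M' (w j) x m)).det := by
        intro j m
        rw [← Matrix.det_updateRow_smul, ← Matrix.det_updateRow_add]
        congr 2
        split_ifs <;> ext <;> simp
      simp only [hsplit, Finset.sum_add_distrib, ← Finset.mul_sum] at hp
      have e1 : ∀ j, g' (v j) j k x + Complex.I * g' (w j) j k x =
        - (H k x * E x) * (∑ m, ζ m x * (M x m j * ((M x).updateRow k (Pi.single j 1)).det)) +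
         E x * (N x k j * ((M x).updateRow k (Pi.single j 1)).det) +
         E x * H k x * (∑ m, (((M x).updateRow k (Pi.single j 1)).updateRow m (if m = k then 0 else M' (v j) x m)).det +
          Complex.I * ∑ m, (((M x).updateRow k (Pi.single j 1)).updateRow m (if m = k then 0 else M' (w j) x m)).det) := by
        intro j
        have hs : ∑ m, ζ m x * (M x m j * ((M x).updateRow k (Pi.single j 1)).det) =
          (∑ m, ζ m x * M x m j) * ((M x).updateRow k (Pi.single j 1)).det := by
          rw [Finset.sum_mul]; refine Finset.sum_congr rfl fun _ _ => by ring
        rw [hs, ← hH j k x]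
        simp only [hg']
        linear_combination (H k x * ((M x).updateRow k (Pi.single j 1)).det) * hE j x
      simp only [e1, Finset.sum_add_distrib, ← Finset.mul_sum, hp]
      rw [Finset.sum_comm]
      simp only [← Finset.mul_sum, hcr]
      rw [← det_updateRow_expand]
      simp
      ring
    rw [Finset.sum_congr rfl fun k _ => hk k, ← Finset.mul_sum, Finset.sum_add_distrib,
      ← Finset.sum_mul, Finset.sum_neg_distrib]
  simp only [this]
  rw [integral_finsetSum]
  · refine Finset.sum_eq_zero fun k _ => ?_
    rw [integral_finsetSum]
    · refine Finset.sum_eq_zero fun j _ => ?_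
      rw [integral_add (i2 _ _ _) ((i2 _ _ _).const_mul _), integral_const_mul, key, key]; simp
    · exact fun j _ => (i2 _ _ _).add ((i2 _ _ _).const_mul _)
  · exact fun k _ => integrable_finsetSum _ fun j _ => (i2 _ _ _).add ((i2 _ _ _).const_mul _)

def Tame {Y : Type*} [NormedAddCommGroup Y] (f : Y → ℂ) : Prop :=
  Continuous f ∧ ∃ C : ℝ, ∃ k : ℕ, 0 ≤ C ∧ ∀ y, ‖f y‖ ≤ C * (1 + ‖y‖) ^ k

namespace Tame
variable {Y : Type*} [NormedAddCommGroup Y]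

theorem of_bound {f : Y → ℂ} (hf : Continuous f) (C : ℝ) (h : ∀ y, ‖f y‖ ≤ C) : Tame f :=
  ⟨hf, C, 0, (norm_nonneg _).trans (h 0), by simpa using h⟩

theorem of_norm {f : Y → ℂ} (hf : Continuous f) (h : ∀ y, ‖f y‖ ≤ ‖y‖) : Tame f :=
  ⟨hf, 1, 1, zero_le_one, fun y => by have := h y; simp; linarith⟩

theorem const (c : ℂ) : Tame (fun _ : Y => c) := of_bound continuous_const ‖c‖ (fun _ => le_rfl)

theorem add {f g : Y → ℂ} (hf : Tame f) (hg : Tame g) : Tame (fun y => f y + g y) := by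
  obtain ⟨cf, C, k, hC, h⟩ := hf
  obtain ⟨cg, D, l, hD, h'⟩ := hg
  refine ⟨cf.add cg, C + D, k + l, by positivity, fun y => ?_⟩
  have h1 : (1 + ‖y‖) ^ k ≤ (1 + ‖y‖) ^ (k + l) := pow_le_pow_right₀ (by simp) (by simp)
  have h2 : (1 + ‖y‖) ^ l ≤ (1 + ‖y‖) ^ (k + l) := pow_le_pow_right₀ (by simp) (by simp)
  calc ‖f y + g y‖ ≤ ‖f y‖ + ‖g y‖ := norm_add_le _ _
    _ ≤ C * (1 + ‖y‖) ^ k + D * (1 + ‖y‖) ^ l := add_le_add (h y) (h' y)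
    _ ≤ C * (1 + ‖y‖) ^ (k + l) + D * (1 + ‖y‖) ^ (k + l) := by gcongr
    _ = _ := by ring

theorem mul {f g : Y → ℂ} (hf : Tame f) (hg : Tame g) : Tame (fun y => f y * g y) := by
  obtain ⟨cf, C, k, hC, h⟩ := hf
  obtain ⟨cg, D, l, hD, h'⟩ := hg
  refine ⟨cf.mul cg, C * D, k + l, by positivity, fun y => ?_⟩
  calc ‖f y * g y‖ = ‖f y‖ * ‖g y‖ := norm_mul _ _
    _ ≤ (C * (1 + ‖y‖) ^ k) * (D * (1 + ‖y‖) ^ l) := by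
      gcongr
      · exact h y
      · exact h' y
    _ = _ := by ring

theorem neg {f : Y → ℂ} (hf : Tame f) : Tame (fun y => - f y) := by
  simpa using (const (-1)).mul hf

theorem sub {f g : Y → ℂ} (hf : Tame f) (hg : Tame g) : Tame (fun y => f y - g y) := by
  simpa [sub_eq_add_neg] using hf.add hg.neg

theorem sum {ι : Type*} (s : Finset ι) {f : ι → Y → ℂ} (hf : ∀ i, Tame (f i)) :
    Tame (fun y => ∑ i ∈ s, f i y) := by
  classical
  induction s using Finset.induction_on with
  | empty => simpa using const 0
  | insert a s ha ih => simpa [Finset.sum_insert ha] using (hf a).add ih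

theorem prod {ι : Type*} (s : Finset ι) {f : ι → Y → ℂ} (hf : ∀ i, Tame (f i)) :
    Tame (fun y => ∏ i ∈ s, f i y) := by
  classical
  induction s using Finset.induction_on with
  | empty => simpa using const 1
  | insert a s ha ih => simpa [Finset.prod_insert ha] using (hf a).mul ih

theorem det {ι : Type*} [Fintype ι] [DecidableEq ι] {f : Y → Matrix ι ι ℂ}
    (hf : ∀ i j, Tame (fun y => f y i j)) : Tame (fun y => (f y).det) := by
  simp only [Matrix.det_apply']
  exact sum _ fun σ => (const _).mul (prod _ fun i => hf _ _)

theorem updateRow {ι : Type*} [Fintype ι] [DecidableEq ι] {f : Y → Matrix ι ι ℂ}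
    {v : Y → ι → ℂ} (k : ι) (hf : ∀ i j, Tame (fun y => f y i j)) (hv : ∀ j, Tame (fun y => v y j)) :
    ∀ i j, Tame (fun y => (f y).updateRow k (v y) i j) := by
  intro i j
  by_cases h : i = k
  · subst h; simpa using hv j
  · simpa [Matrix.updateRow_ne h] using hf i j

end Tame

/-- exponentially decaying times tame is dominated -/
theorem Tame.dominate {X : Type*} [NormedAddCommGroup X] [NormedSpace ℝ X]
    [FiniteDimensional ℝ X] [MeasurableSpace X] [BorelSpace X] (μ : Measure X) [μ.IsAddHaarMeasure]
    {f : ℝ × X → ℂ} (hf : Tame f) (B c D : ℝ) (hc : 0 < c) :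
    ∃ bd : X → ℝ, Integrable bd μ ∧ ∀ s x, |s| ≤ B → Real.exp (D - c * ‖x‖) * ‖f (s, x)‖ ≤ bd x := by
  obtain ⟨hfc, C, k, hC, h⟩ := hf
  -- choose integrable bound (1+‖x‖)^{-(d+1)}
  set d : ℕ := Module.finrank ℝ X with hd
  have hint : Integrable (fun x : X => (1 + ‖x‖) ^ (-((d:ℝ) + 1))) μ :=
    integrable_one_add_norm (by simp [hd])
  rcases lt_or_ge B 0 with hB | hB
  · exact ⟨0, integrable_zero _ _ _, fun s x hs => absurd ((abs_nonneg s).trans hs) (not_le.2 hB)⟩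
  -- sup of exp(-c t) (1+t)^(k+d+1)
  obtain ⟨A, hA⟩ : ∃ A : ℝ, ∀ t : ℝ, 0 ≤ t → Real.exp (-c * t) * (1 + t) ^ (k + d + 1) ≤ A := by
    set m := k + d + 1
    refine ⟨(m.factorial : ℝ) / c ^ m * Real.exp c, fun t ht => ?_⟩
    have h1 := Real.pow_div_factorial_le_exp (x := c * (1 + t)) (by positivity) m
    have h2 : (1 + t) ^ m ≤ (m.factorial : ℝ) / c ^ m * Real.exp (c * (1 + t)) := by
      rw [mul_pow, div_le_iff₀ (by positivity)] at h1
      rw [div_mul_eq_mul_div, le_div_iff₀ (by positivity)]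
      linarith
    calc Real.exp (-c * t) * (1 + t) ^ m ≤ Real.exp (-c * t) *
          ((m.factorial : ℝ) / c ^ m * Real.exp (c * (1 + t))) := by gcongr
      _ = (m.factorial : ℝ) / c ^ m * (Real.exp (-c * t) * Real.exp (c * (1 + t))) := by ring
      _ = _ := by rw [← Real.exp_add]; ring_nf
  refine ⟨fun x => (Real.exp D * C * (1 + B) ^ k * A) * (1 + ‖x‖) ^ (-((d:ℝ) + 1)),
    hint.const_mul _, fun s x hs => ?_⟩
  have h1 : 1 + ‖((s, x) : ℝ × X)‖ ≤ (1 + B) * (1 + ‖x‖) := by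
    have : ‖((s, x) : ℝ × X)‖ ≤ B + ‖x‖ := by
      rw [Prod.norm_def]
      refine max_le ?_ ?_
      · simp only [Real.norm_eq_abs]; linarith [norm_nonneg x]
      · simp only; linarith
    nlinarith [norm_nonneg x]
  have h2 := hA ‖x‖ (norm_nonneg x)
  have h3 : (1 + ‖x‖) ^ (-((d:ℝ) + 1)) = ((1 + ‖x‖) ^ (d + 1))⁻¹ := by
    rw [Real.rpow_neg (by positivity)]
    congr 1
    exact_mod_cast Real.rpow_natCast (1 + ‖x‖) (d + 1)
  beta_reduce
  rw [h3, ← div_eq_mul_inv, le_div_iff₀ (by positivity)]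
  calc Real.exp (D - c * ‖x‖) * ‖f (s, x)‖ * (1 + ‖x‖) ^ (d + 1)
      ≤ Real.exp (D - c * ‖x‖) * (C * ((1 + B) * (1 + ‖x‖)) ^ k) * (1 + ‖x‖) ^ (d + 1) := by
        gcongr
        refine (h _).trans ?_
        gcongr
    _ = Real.exp D * C * (1 + B) ^ k * (Real.exp (-c * ‖x‖) * (1 + ‖x‖) ^ (k + d + 1)) := by
        rw [sub_eq_add_neg, Real.exp_add, mul_pow, neg_mul, show k + d + 1 = k + (d + 1) by ring, pow_add (1 + ‖x‖) k]; ring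
    _ ≤ _ := by gcongr

section Kup
variable {n : ℕ}

def kz (k : Fin n) (z : EuclideanSpace ℝ (Fin n) × EuclideanSpace ℝ (Fin n)) : ℂ :=
  (z.1 k : ℂ) + Complex.I * (z.2 k : ℂ)

/-- general `α, β` combination -/
def kC (u : Fin n → EuclideanSpace ℝ (Fin n) → ℝ) (α β : ℝ) (k : Fin n)
    (z : EuclideanSpace ℝ (Fin n) × EuclideanSpace ℝ (Fin n)) : ℂ :=
  ((α * u k z.1 + β * z.1 k : ℝ) : ℂ) - Complex.I * ((α * u k z.2 + β * z.2 k : ℝ) : ℂ)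

def kN (a : Fin n → Fin n → EuclideanSpace ℝ (Fin n) → ℝ) (α β : ℝ)
    (z : EuclideanSpace ℝ (Fin n) × EuclideanSpace ℝ (Fin n)) : Matrix (Fin n) (Fin n) ℂ :=
  fun k j => ((α * (a k j z.1 + a k j z.2) + β * (2 * if k = j then 1 else 0) : ℝ) : ℂ)

def kE (u : Fin n → EuclideanSpace ℝ (Fin n) → ℝ) (α β : ℝ)
    (z : EuclideanSpace ℝ (Fin n) × EuclideanSpace ℝ (Fin n)) : ℂ :=
  Complex.exp (-(∑ k, kz k z * kC u α β k z))

theorem kE_norm (u : Fin n → EuclideanSpace ℝ (Fin n) → ℝ) (α β : ℝ)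
    (z : EuclideanSpace ℝ (Fin n) × EuclideanSpace ℝ (Fin n)) :
    ‖kE u α β z‖ = Real.exp (-(α * (∑ k, z.1 k * u k z.1 + ∑ k, z.2 k * u k z.2) +
      β * (‖z.1‖ ^ 2 + ‖z.2‖ ^ 2))) := by
  rw [kE, Complex.norm_exp]
  congr 1
  simp only [Complex.neg_re, Complex.re_sum, EuclideanSpace.real_norm_sq_eq]
  congr 1
  rw [← Finset.sum_add_distrib, ← Finset.sum_add_distrib, Finset.mul_sum, Finset.mul_sum,
    ← Finset.sum_add_distrib]
  refine Finset.sum_congr rfl fun k _ => ?_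
  simp [kz, kC, -Complex.ofReal_add, -Complex.ofReal_mul]
  ring

theorem kC_deriv (u : Fin n → EuclideanSpace ℝ (Fin n) → ℝ)
    (a : Fin n → Fin n → EuclideanSpace ℝ (Fin n) → ℝ)
    (hu : ∀ k x v, HasLineDerivAt ℝ (u k) (∑ l, a k l x * v l) x v) (α β : ℝ)
    (v : EuclideanSpace ℝ (Fin n) × EuclideanSpace ℝ (Fin n)) (k : Fin n)
    (z : EuclideanSpace ℝ (Fin n) × EuclideanSpace ℝ (Fin n)) :
    HasLineDerivAt ℝ (kC u α β k)
    (((α * (∑ l, a k l z.1 * v.1 l) + β * v.1 k : ℝ) : ℂ) - Complex.I *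
      ((α * (∑ l, a k l z.2 * v.2 l) + β * v.2 k : ℝ) : ℂ)) z v := by
  have hl : ∀ x w : EuclideanSpace ℝ (Fin n), HasDerivAt (fun s : ℝ => (x + s • w) k) (w k) 0 := by
    intro x w
    simpa using ((hasDerivAt_id (0:ℝ)).mul_const (w k)).const_add (x k)
  have h1 := (((hu k z.1 v.1).const_mul α).add ((hl z.1 v.1).const_mul β)).ofReal_comp
  have h2 := (((hu k z.2 v.2).const_mul α).add ((hl z.2 v.2).const_mul β)).ofReal_comp
  exact h1.sub (h2.const_mul Complex.I)

theorem kz_deriv (v : EuclideanSpace ℝ (Fin n) × EuclideanSpace ℝ (Fin n)) (k : Fin n)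
    (z : EuclideanSpace ℝ (Fin n) × EuclideanSpace ℝ (Fin n)) :
    HasLineDerivAt ℝ (kz k) (kz k v) z v := by
  have hl : ∀ x w : EuclideanSpace ℝ (Fin n), HasDerivAt (fun s : ℝ => (x + s • w) k) (w k) 0 := by
    intro x w
    simpa using ((hasDerivAt_id (0:ℝ)).mul_const (w k)).const_add (x k)
  exact (hl z.1 v.1).ofReal_comp.add ((hl z.2 v.2).ofReal_comp.const_mul Complex.I)

theorem kN_deriv (a : Fin n → Fin n → EuclideanSpace ℝ (Fin n) → ℝ)
    (b : Fin n → Fin n → Fin n → EuclideanSpace ℝ (Fin n) → ℝ)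
    (ha : ∀ k j x v, HasLineDerivAt ℝ (a k j) (∑ l, b k j l x * v l) x v) (α β : ℝ)
    (v : EuclideanSpace ℝ (Fin n) × EuclideanSpace ℝ (Fin n)) (k j : Fin n)
    (z : EuclideanSpace ℝ (Fin n) × EuclideanSpace ℝ (Fin n)) :
    HasLineDerivAt ℝ (fun z => kN a α β z k j)
    (((α * (∑ l, b k j l z.1 * v.1 l + ∑ l, b k j l z.2 * v.2 l) : ℝ) : ℂ)) z v := by
  exact ((((ha k j z.1 v.1).add (ha k j z.2 v.2)).const_mul α).add_const _).ofReal_comp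

variable (u : Fin n → EuclideanSpace ℝ (Fin n) → ℝ)
    (a : Fin n → Fin n → EuclideanSpace ℝ (Fin n) → ℝ)
    (b : Fin n → Fin n → Fin n → EuclideanSpace ℝ (Fin n) → ℝ)

theorem kE_deriv
    (hu : ∀ k x v, HasLineDerivAt ℝ (u k) (∑ l, a k l x * v l) x v) (α β : ℝ)
    (v : EuclideanSpace ℝ (Fin n) × EuclideanSpace ℝ (Fin n))
    (z : EuclideanSpace ℝ (Fin n) × EuclideanSpace ℝ (Fin n)) :
    HasLineDerivAt ℝ (kE u α β)
    (-(∑ k, (kz k v * kC u α β k z + kz k z *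
     (((α * (∑ l, a k l z.1 * v.1 l) + β * v.1 k : ℝ) : ℂ) - Complex.I *
      ((α * (∑ l, a k l z.2 * v.2 l) + β * v.2 k : ℝ) : ℂ)))) * kE u α β z) z v := by
  have h1 := (HasDerivAt.fun_sum (u := Finset.univ) (fun k _ => (kz_deriv v k z).mul (kC_deriv u a hu α β v k z))).neg.cexp
  unfold HasLineDerivAt
  convert! h1 using 1
  simp [kE]
  ring

/-- the two scalings have `s`-derivative -/
theorem kF_sderiv (z : EuclideanSpace ℝ (Fin n) × EuclideanSpace ℝ (Fin n)) (s : ℝ) :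
    HasDerivAt (fun s : ℝ => kE u ((1 - s) ^ 2) (s ^ 2) z * (kN a ((1 - s) ^ 2) (s ^ 2) z).det)
      (kE u ((1 - s) ^ 2) (s ^ 2) z * (-(∑ k, kz k z * kC u (-(2 * (1 - s))) (2 * s) k z) *
        (kN a ((1 - s) ^ 2) (s ^ 2) z).det +
        ∑ k, ((kN a ((1 - s) ^ 2) (s ^ 2) z).updateRow k (kN a (-(2 * (1 - s))) (2 * s) z k)).det)) s := by
  have hα : HasDerivAt (fun s : ℝ => (1 - s) ^ 2) (-(2 * (1 - s))) s := by
    have := ((hasDerivAt_id s).const_sub 1).pow 2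
    convert! this using 1; simp
  have hβ : HasDerivAt (fun s : ℝ => s ^ 2) (2 * s) s := by
    simpa using hasDerivAt_pow 2 s
  have hC : ∀ k, HasDerivAt (fun s : ℝ => kC u ((1 - s) ^ 2) (s ^ 2) k z)
      (kC u (-(2 * (1 - s))) (2 * s) k z) s := by
    intro k
    exact ((hα.mul_const _).add (hβ.mul_const _)).ofReal_comp.sub
      (((hα.mul_const _).add (hβ.mul_const _)).ofReal_comp.const_mul _)
  have hN : ∀ k j, HasDerivAt (fun s : ℝ => kN a ((1 - s) ^ 2) (s ^ 2) z k j)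
      (kN a (-(2 * (1 - s))) (2 * s) z k j) s := by
    intro k j
    exact ((hα.mul_const _).add (hβ.mul_const _)).ofReal_comp
  have h1 := (HasDerivAt.fun_sum (u := Finset.univ) (fun k _ => (hC k).const_mul (kz k z))).neg.cexp
  have h2 := h1.mul (det_hasDerivAt _ _ s hN)
  convert! h2 using 1
  simp only [kE, Pi.neg_apply]
  ring

variable (hu : ∀ k x v, HasLineDerivAt ℝ (u k) (∑ l, a k l x * v l) x v)
  (ha : ∀ k j x v, HasLineDerivAt ℝ (a k j) (∑ l, b k j l x * v l) x v)
  (cu : ∀ k, Continuous (u k)) (ca : ∀ k j, Continuous (a k j)) (cb : ∀ k j l, Continuous (b k j l))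
  (R : ℝ) (bu : ∀ k x, |u k x| ≤ R) (ba : ∀ k j x, |a k j x| ≤ R) (bb : ∀ k j l x, |b k j l x| ≤ R)
  (hsym : ∀ k j l x, b k j l x = b k l j x)
  (c C : ℝ) (hc : 0 < c) (hgr : ∀ x : EuclideanSpace ℝ (Fin n), c * ‖x‖ - C ≤ ∑ k, x k * u k x)

include hc hgr in
theorem kE_bound (B : ℝ) : ∃ D : ℝ, ∀ s z, |s| ≤ B →
    ‖kE u ((1 - s) ^ 2) (s ^ 2) z‖ ≤ Real.exp (D - c / 2 * ‖z‖) := by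
  set C' := max C (c ^ 2) with hC'
  have hC0 : 0 ≤ C' := (sq_nonneg c).trans (le_max_right _ _)
  refine ⟨2 * C' * ((1 + B) ^ 2 + B ^ 2), fun s z hs => ?_⟩
  rw [kE_norm, Real.exp_le_exp]
  have hB : 0 ≤ B := (abs_nonneg s).trans hs
  obtain ⟨hs1, hs2⟩ := abs_le.1 hs
  have h1 : ∀ x : EuclideanSpace ℝ (Fin n), c * ‖x‖ - C' ≤ ∑ k, x k * u k x := fun x => by
    have := hgr x; have := le_max_left C (c ^ 2); linarith
  have h2 : ∀ x : EuclideanSpace ℝ (Fin n), c * ‖x‖ - C' ≤ ‖x‖ ^ 2 := fun x => by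
    have := le_max_right C (c ^ 2); nlinarith [sq_nonneg (‖x‖ - c / 2)]
  have hz : ‖z‖ ≤ ‖z.1‖ + ‖z.2‖ := by
    rw [Prod.norm_def]
    exact max_le (by linarith [norm_nonneg z.2]) (by linarith [norm_nonneg z.1])
  have hα : (0:ℝ) ≤ (1 - s) ^ 2 := sq_nonneg _
  have hβ : (0:ℝ) ≤ s ^ 2 := sq_nonneg _
  have hab : 1 / 2 ≤ (1 - s) ^ 2 + s ^ 2 := by nlinarith [sq_nonneg (s - 1 / 2)]
  have hab2 : (1 - s) ^ 2 + s ^ 2 ≤ (1 + B) ^ 2 + B ^ 2 := by nlinarith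
  have e1 := mul_le_mul_of_nonneg_left (add_le_add (h1 z.1) (h1 z.2)) hα
  have e2 := mul_le_mul_of_nonneg_left (add_le_add (h2 z.1) (h2 z.2)) hβ
  have e3 : c * ‖z‖ / 2 ≤ ((1 - s) ^ 2 + s ^ 2) * (c * (‖z.1‖ + ‖z.2‖)) := by
    have : 0 ≤ c * (‖z.1‖ + ‖z.2‖) := by positivity
    have : c * ‖z‖ ≤ c * (‖z.1‖ + ‖z.2‖) := by gcongr
    nlinarith
  have e4 : 2 * C' * ((1 - s) ^ 2 + s ^ 2) ≤ 2 * C' * ((1 + B) ^ 2 + B ^ 2) := by gcongr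
  nlinarith

theorem tame_coord1 (k : Fin n) : Tame (fun p : ℝ × EuclideanSpace ℝ (Fin n) × EuclideanSpace ℝ (Fin n) =>
    (p.2.1 k : ℂ)) := by
  refine Tame.of_norm (by fun_prop) fun p => ?_
  rw [Complex.norm_real]
  exact (PiLp.norm_apply_le p.2.1 k).trans ((norm_fst_le p.2).trans (norm_snd_le p))

theorem tame_coord2 (k : Fin n) : Tame (fun p : ℝ × EuclideanSpace ℝ (Fin n) × EuclideanSpace ℝ (Fin n) =>
    (p.2.2 k : ℂ)) := by
  refine Tame.of_norm (by fun_prop) fun p => ?_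
  rw [Complex.norm_real]
  exact (PiLp.norm_apply_le p.2.2 k).trans ((norm_snd_le p.2).trans (norm_snd_le p))

theorem tame_s : Tame (fun p : ℝ × EuclideanSpace ℝ (Fin n) × EuclideanSpace ℝ (Fin n) =>
    (p.1 : ℂ)) := by
  refine Tame.of_norm (by fun_prop) fun p => ?_
  rw [Complex.norm_real]
  exact norm_fst_le p

theorem tame_f1 (f : EuclideanSpace ℝ (Fin n) → ℝ) (hf : Continuous f) (R : ℝ) (h : ∀ x, |f x| ≤ R) :
    Tame (fun p : ℝ × EuclideanSpace ℝ (Fin n) × EuclideanSpace ℝ (Fin n) => (f p.2.1 : ℂ)) :=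
  Tame.of_bound (by fun_prop) R fun p => by rw [Complex.norm_real]; exact h _

theorem tame_f2 (f : EuclideanSpace ℝ (Fin n) → ℝ) (hf : Continuous f) (R : ℝ) (h : ∀ x, |f x| ≤ R) :
    Tame (fun p : ℝ × EuclideanSpace ℝ (Fin n) × EuclideanSpace ℝ (Fin n) => (f p.2.2 : ℂ)) :=
  Tame.of_bound (by fun_prop) R fun p => by rw [Complex.norm_real]; exact h _

theorem tame_kz (k : Fin n) : Tame (fun p : ℝ × EuclideanSpace ℝ (Fin n) × EuclideanSpace ℝ (Fin n) =>
    kz k p.2) := (tame_coord1 k).add ((Tame.const _).mul (tame_coord2 k))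

include cu bu in
theorem tame_kC (α β : ℝ → ℝ)
    (hα : Tame (fun p : ℝ × EuclideanSpace ℝ (Fin n) × EuclideanSpace ℝ (Fin n) => (α p.1 : ℂ)))
    (hβ : Tame (fun p : ℝ × EuclideanSpace ℝ (Fin n) × EuclideanSpace ℝ (Fin n) => (β p.1 : ℂ)))
    (k : Fin n) : Tame (fun p : ℝ × EuclideanSpace ℝ (Fin n) × EuclideanSpace ℝ (Fin n) =>
    kC u (α p.1) (β p.1) k p.2) := by
  simp only [kC, Complex.ofReal_add, Complex.ofReal_mul]
  exact ((hα.mul (tame_f1 _ (cu k) R (bu k))).add (hβ.mul (tame_coord1 k))).sub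
    ((Tame.const _).mul ((hα.mul (tame_f2 _ (cu k) R (bu k))).add (hβ.mul (tame_coord2 k))))

include ca ba in
theorem tame_kN (α β : ℝ → ℝ)
    (hα : Tame (fun p : ℝ × EuclideanSpace ℝ (Fin n) × EuclideanSpace ℝ (Fin n) => (α p.1 : ℂ)))
    (hβ : Tame (fun p : ℝ × EuclideanSpace ℝ (Fin n) × EuclideanSpace ℝ (Fin n) => (β p.1 : ℂ)))
    (k j : Fin n) : Tame (fun p : ℝ × EuclideanSpace ℝ (Fin n) × EuclideanSpace ℝ (Fin n) =>
    kN a (α p.1) (β p.1) p.2 k j) := by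
  simp only [kN, Complex.ofReal_add, Complex.ofReal_mul]
  exact (hα.mul ((tame_f1 _ (ca k j) R (ba k j)).add (tame_f2 _ (ca k j) R (ba k j)))).add
    (hβ.mul ((Tame.const _).mul (Tame.const _)))

theorem tame_al : Tame (fun p : ℝ × EuclideanSpace ℝ (Fin n) × EuclideanSpace ℝ (Fin n) =>
    (((1 - p.1) ^ 2 : ℝ) : ℂ)) := by
  have := ((Tame.const 1).sub (tame_s (n := n))).mul ((Tame.const 1).sub (tame_s (n := n)))
  simpa [sq] using this

theorem tame_be : Tame (fun p : ℝ × EuclideanSpace ℝ (Fin n) × EuclideanSpace ℝ (Fin n) =>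
    ((p.1 ^ 2 : ℝ) : ℂ)) := by
  have := (tame_s (n := n)).mul (tame_s (n := n))
  simpa [sq] using this

theorem tame_al' : Tame (fun p : ℝ × EuclideanSpace ℝ (Fin n) × EuclideanSpace ℝ (Fin n) =>
    ((-(2 * (1 - p.1)) : ℝ) : ℂ)) := by
  have := ((Tame.const 2).mul ((Tame.const 1).sub (tame_s (n := n)))).neg
  simpa using this

theorem tame_be' : Tame (fun p : ℝ × EuclideanSpace ℝ (Fin n) × EuclideanSpace ℝ (Fin n) =>
    ((2 * p.1 : ℝ) : ℂ)) := by
  have := (Tame.const 2).mul (tame_s (n := n))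
  simpa using this

include cu in
theorem kE_cont : Continuous (fun p : ℝ × EuclideanSpace ℝ (Fin n) × EuclideanSpace ℝ (Fin n) =>
    kE u ((1 - p.1) ^ 2) (p.1 ^ 2) p.2) := by
  unfold kE kz kC
  fun_prop

instance prod_haar : (volume : Measure (EuclideanSpace ℝ (Fin n) × EuclideanSpace ℝ (Fin n))).IsAddHaarMeasure :=
  Measure.prod.instIsAddHaarMeasure (volume : Measure (EuclideanSpace ℝ (Fin n)))
    (volume : Measure (EuclideanSpace ℝ (Fin n)))

include cu hc hgr in
theorem kE_int (f : ℝ × EuclideanSpace ℝ (Fin n) × EuclideanSpace ℝ (Fin n) → ℂ) (hf : Tame f) (s : ℝ) :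
    Integrable (fun z => kE u ((1 - s) ^ 2) (s ^ 2) z * f (s, z)) := by
  obtain ⟨D, hD⟩ := kE_bound u c C hc hgr |s|
  obtain ⟨bd, hbd, h⟩ := hf.dominate (volume : Measure (EuclideanSpace ℝ (Fin n) × EuclideanSpace ℝ (Fin n)))
    |s| (c / 2) D (by positivity)
  refine hbd.mono' ?_ (Filter.Eventually.of_forall fun z => ?_)
  · refine Continuous.aestronglyMeasurable ?_
    have h1 := (kE_cont u cu).comp (Continuous.prodMk_right (Y := EuclideanSpace ℝ (Fin n) × EuclideanSpace ℝ (Fin n)) s)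
    have h2 := hf.1.comp (Continuous.prodMk_right (Y := EuclideanSpace ℝ (Fin n) × EuclideanSpace ℝ (Fin n)) s)
    exact h1.mul h2
  · rw [norm_mul]
    refine le_trans ?_ (h s z le_rfl)
    gcongr
    exact hD s z le_rfl


/-- directional derivative of `kC` -/
def kC' (a : Fin n → Fin n → EuclideanSpace ℝ (Fin n) → ℝ) (α β : ℝ)
    (v : EuclideanSpace ℝ (Fin n) × EuclideanSpace ℝ (Fin n)) (k : Fin n)
    (z : EuclideanSpace ℝ (Fin n) × EuclideanSpace ℝ (Fin n)) : ℂ :=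
  ((α * (∑ l, a k l z.1 * v.1 l) + β * v.1 k : ℝ) : ℂ) - Complex.I *
      ((α * (∑ l, a k l z.2 * v.2 l) + β * v.2 k : ℝ) : ℂ)

def kN' (b : Fin n → Fin n → Fin n → EuclideanSpace ℝ (Fin n) → ℝ) (α : ℝ)
    (v : EuclideanSpace ℝ (Fin n) × EuclideanSpace ℝ (Fin n))
    (z : EuclideanSpace ℝ (Fin n) × EuclideanSpace ℝ (Fin n)) : Matrix (Fin n) (Fin n) ℂ :=
  fun k j => ((α * (∑ l, b k j l z.1 * v.1 l + ∑ l, b k j l z.2 * v.2 l) : ℝ) : ℂ)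

include ca ba in
theorem tame_kC' (α β : ℝ → ℝ)
    (hα : Tame (fun p : ℝ × EuclideanSpace ℝ (Fin n) × EuclideanSpace ℝ (Fin n) => (α p.1 : ℂ)))
    (hβ : Tame (fun p : ℝ × EuclideanSpace ℝ (Fin n) × EuclideanSpace ℝ (Fin n) => (β p.1 : ℂ)))
    (v : EuclideanSpace ℝ (Fin n) × EuclideanSpace ℝ (Fin n)) (k : Fin n) :
    Tame (fun p : ℝ × EuclideanSpace ℝ (Fin n) × EuclideanSpace ℝ (Fin n) =>
    kC' a (α p.1) (β p.1) v k p.2) := by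
  simp only [kC', Complex.ofReal_add, Complex.ofReal_mul, Complex.ofReal_sum]
  exact ((hα.mul (Tame.sum _ fun l => (tame_f1 _ (ca k l) R (ba k l)).mul (Tame.const _))).add
    (hβ.mul (Tame.const _))).sub
    ((Tame.const _).mul ((hα.mul (Tame.sum _ fun l => (tame_f2 _ (ca k l) R (ba k l)).mul (Tame.const _))).add
      (hβ.mul (Tame.const _))))

include cb bb in
theorem tame_kN' (α : ℝ → ℝ)
    (hα : Tame (fun p : ℝ × EuclideanSpace ℝ (Fin n) × EuclideanSpace ℝ (Fin n) => (α p.1 : ℂ)))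
    (v : EuclideanSpace ℝ (Fin n) × EuclideanSpace ℝ (Fin n)) (k j : Fin n) :
    Tame (fun p : ℝ × EuclideanSpace ℝ (Fin n) × EuclideanSpace ℝ (Fin n) =>
    kN' b (α p.1) v p.2 k j) := by
  simp only [kN', Complex.ofReal_add, Complex.ofReal_mul, Complex.ofReal_sum]
  exact hα.mul ((Tame.sum _ fun l => (tame_f1 _ (cb k j l) R (bb k j l)).mul (Tame.const _)).add
    (Tame.sum _ fun l => (tame_f2 _ (cb k j l) R (bb k j l)).mul (Tame.const _)))

include hu ha cu ca cb bu ba bb hsym hc hgr in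
theorem kup_zero (s : ℝ) : ∫ z, kE u ((1 - s) ^ 2) (s ^ 2) z *
        (-(∑ k, kz k z * kC u (-(2 * (1 - s))) (2 * s) k z) *
        (kN a ((1 - s) ^ 2) (s ^ 2) z).det +
        ∑ k, ((kN a ((1 - s) ^ 2) (s ^ 2) z).updateRow k (kN a (-(2 * (1 - s))) (2 * s) z k)).det) = 0 := by
  have hkI : ∀ f, Tame f → Integrable (fun z => kE u ((1 - s) ^ 2) (s ^ 2) z * f (s, z)) :=
    fun f hf => kE_int u cu c C hc hgr f hf s
  have tN := tame_kN a ca R ba (fun s => (1 - s) ^ 2) (fun s => s ^ 2) tame_al tame_be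
  have tH := tame_kC u cu R bu (fun s => -(2 * (1 - s))) (fun s => 2 * s) tame_al' tame_be'
  have tC := tame_kC u cu R bu (fun s => (1 - s) ^ 2) (fun s => s ^ 2) tame_al tame_be
  have tH' := tame_kC' a ca R ba (fun s => -(2 * (1 - s))) (fun s => 2 * s) tame_al' tame_be'
  have tC' := tame_kC' a ca R ba (fun s => (1 - s) ^ 2) (fun s => s ^ 2) tame_al tame_be
  have tN' := tame_kN' b cb R bb (fun s => (1 - s) ^ 2) tame_al
  have tdet : ∀ j k, Tame (fun p : ℝ × EuclideanSpace ℝ (Fin n) × EuclideanSpace ℝ (Fin n) =>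
      ((kN a ((1 - p.1) ^ 2) (p.1 ^ 2) p.2).updateRow k (Pi.single j 1)).det) := fun j k =>
    Tame.det (Tame.updateRow k tN fun i => Tame.const _)
  refine div_zero_abs volume (fun j => (EuclideanSpace.single j 1, 0)) (fun j => (0, EuclideanSpace.single j 1))
    (kE u ((1 - s) ^ 2) (s ^ 2)) (kC u (-(2 * (1 - s))) (2 * s)) (kN a ((1 - s) ^ 2) (s ^ 2))
    kz (kN a (-(2 * (1 - s))) (2 * s))
    (fun v z => -(∑ k, (kz k v * kC u ((1 - s) ^ 2) (s ^ 2) k z + kz k z * kC' a ((1 - s) ^ 2) (s ^ 2) v k z))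
      * kE u ((1 - s) ^ 2) (s ^ 2) z)
    (kC' a (-(2 * (1 - s))) (2 * s)) (kN' b ((1 - s) ^ 2))
    (kE_deriv u a hu _ _) (kC_deriv u a hu _ _) (kN_deriv a b ha _ _) ?_ ?_ ?_ ?_ ?_
  · intro j z
    rw [← mul_assoc, ← add_mul]
    congr 1
    rw [mul_neg, ← neg_add, Finset.mul_sum, ← Finset.sum_add_distrib]
    congr 1
    refine Finset.sum_congr rfl fun k _ => ?_
    have hI : Complex.I * Complex.I = -1 := Complex.I_mul_I
    by_cases hkj : k = j
    · subst hkj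
      simp [kz, kC', kN, Pi.single_apply]
      linear_combination (kC u ((1 - s) ^ 2) (s ^ 2) k z - ((z.1 k : ℂ) + Complex.I * (z.2 k : ℂ)) * ((1 - (s:ℂ)) ^ 2 * (a k k z.2 : ℂ) + (s:ℂ)^2)) * hI
    · simp [kz, kC', kN, Pi.single_apply, hkj, Ne.symm hkj]
      linear_combination (- ((z.1 k : ℂ) + Complex.I * (z.2 k : ℂ)) * ((1 - (s:ℂ)) ^ 2 * (a k j z.2 : ℂ))) * hI
  · intro j k z
    have hI : Complex.I * Complex.I = -1 := Complex.I_mul_I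
    by_cases hkj : k = j
    · subst hkj
      simp [kC', kN, Pi.single_apply]
      linear_combination (-(-(2 * (1 - (s:ℂ))) * (a k k z.2 : ℂ) + 2 * (s:ℂ))) * hI
    · simp [kC', kN, Pi.single_apply, hkj, Ne.symm hkj]
      linear_combination (-(-(2 * (1 - (s:ℂ))) * (a k j z.2 : ℂ))) * hI
  · intro j k l z
    simp [kN', Pi.single_apply, hsym k l j]
  · intro j k
    have := hkI _ ((tH k).mul (tdet j k))
    simpa [mul_assoc] using this
  · intro v j k
    have t1 : ∀ m, Tame (fun p : ℝ × EuclideanSpace ℝ (Fin n) × EuclideanSpace ℝ (Fin n) =>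
      (((kN a ((1 - p.1) ^ 2) (p.1 ^ 2) p.2).updateRow k (Pi.single j 1)).updateRow m
        (if m = k then 0 else kN' b ((1 - p.1) ^ 2) v p.2 m)).det) := fun m => by
      refine Tame.det (Tame.updateRow m (Tame.updateRow k tN fun i => Tame.const _) fun i => ?_)
      by_cases h : m = k
      · simpa [h] using Tame.const 0
      · simpa [h] using tN' v m i
    have t2 := ((((Tame.sum Finset.univ fun k => ((Tame.const (kz k v)).mul (tC k)).add
      ((tame_kz k).mul (tC' v k))).neg.mul (tH k)).add (tH' v k)).mul (tdet j k)).add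
      ((tH k).mul (Tame.sum Finset.univ t1))
    refine (hkI _ t2).congr (Filter.Eventually.of_forall fun z => ?_)
    simp only
    ring

include hu ha cu ca cb bu ba bb hsym hc hgr in
theorem kup_deriv (s : ℝ) : HasDerivAt (fun s : ℝ => ∫ z, kE u ((1 - s) ^ 2) (s ^ 2) z *
    (kN a ((1 - s) ^ 2) (s ^ 2) z).det) 0 s := by
  have tN := tame_kN a ca R ba (fun s => (1 - s) ^ 2) (fun s => s ^ 2) tame_al tame_be
  have tN2 := tame_kN a ca R ba (fun s => -(2 * (1 - s))) (fun s => 2 * s) tame_al' tame_be'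
  have tH := tame_kC u cu R bu (fun s => -(2 * (1 - s))) (fun s => 2 * s) tame_al' tame_be'
  have tF := ((Tame.sum Finset.univ fun k => (tame_kz k).mul (tH k)).neg.mul (Tame.det tN)).add
    (Tame.sum Finset.univ fun k => Tame.det (Tame.updateRow k tN (tN2 k)))
  have hkI : ∀ f, Tame f → ∀ s, Integrable (fun z => kE u ((1 - s) ^ 2) (s ^ 2) z * f (s, z)) :=
    fun f hf s => kE_int u cu c C hc hgr f hf s
  obtain ⟨D, hD⟩ := kE_bound u c C hc hgr (|s| + 1)
  obtain ⟨bd, hbd, hb⟩ := tF.dominate (volume : Measure (EuclideanSpace ℝ (Fin n) × EuclideanSpace ℝ (Fin n)))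
    (|s| + 1) (c / 2) D (by positivity)
  have key := hasDerivAt_integral_of_dominated_loc_of_deriv_le (𝕜 := ℝ)
    (μ := (volume : Measure (EuclideanSpace ℝ (Fin n) × EuclideanSpace ℝ (Fin n)))) (x₀ := s)
    (s := Metric.ball s 1) (bound := bd)
    (F := fun s z => kE u ((1 - s) ^ 2) (s ^ 2) z * (kN a ((1 - s) ^ 2) (s ^ 2) z).det)
    (F' := fun s z => kE u ((1 - s) ^ 2) (s ^ 2) z *
        (-(∑ k, kz k z * kC u (-(2 * (1 - s))) (2 * s) k z) *
        (kN a ((1 - s) ^ 2) (s ^ 2) z).det +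
        ∑ k, ((kN a ((1 - s) ^ 2) (s ^ 2) z).updateRow k (kN a (-(2 * (1 - s))) (2 * s) z k)).det))
    (Metric.ball_mem_nhds s one_pos)
    (Filter.Eventually.of_forall fun s => (hkI _ (Tame.det tN) s).aestronglyMeasurable)
    (hkI _ (Tame.det tN) s) (hkI _ tF s).aestronglyMeasurable
    (Filter.Eventually.of_forall fun z t ht => by
      have h1 : |t| ≤ |s| + 1 := by
        have := abs_sub_abs_le_abs_sub t s
        rw [Metric.mem_ball, Real.dist_eq] at ht
        linarith
      rw [norm_mul]
      refine le_trans ?_ (hb t z h1)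
      exact mul_le_mul_of_nonneg_right (hD t z h1) (norm_nonneg _)) hbd
    (Filter.Eventually.of_forall fun z t ht => kF_sderiv u a z t)
  have h0 := kup_zero u a b hu ha cu ca cb R bu ba bb hsym c C hc hgr s
  rw [h0] at key
  exact key.2

theorem kup_one : ∫ z, kE u 0 1 z * (kN a 0 1 z).det = ((2 * Real.pi) ^ n : ℝ) := by
  have h1 : ∀ z, kN a 0 1 z = (2 : ℂ) • (1 : Matrix (Fin n) (Fin n) ℂ) := by
    intro z; ext i j; by_cases h : i = j <;> simp [kN, Matrix.one_apply, h]
  have h2 : ∀ z, kE u 0 1 z = ((Real.exp (-1 * ‖z.1‖ ^ 2) * Real.exp (-1 * ‖z.2‖ ^ 2) : ℝ) : ℂ) := by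
    intro z
    rw [← Real.exp_add, Complex.ofReal_exp, kE]
    congr 1
    simp only [EuclideanSpace.real_norm_sq_eq, kz, kC]
    rw [← mul_add, neg_one_mul, ← Finset.sum_add_distrib]
    push_cast
    congr 1
    refine Finset.sum_congr rfl fun k _ => ?_
    linear_combination (-(z.2 k : ℂ) ^ 2) * Complex.I_mul_I
  simp only [h1, h2, Matrix.det_smul, Matrix.det_one, Fintype.card_fin]
  rw [integral_mul_const, integral_complex_ofReal]
  have h3 : ∫ z : EuclideanSpace ℝ (Fin n) × EuclideanSpace ℝ (Fin n),
      Real.exp (-1 * ‖z.1‖ ^ 2) * Real.exp (-1 * ‖z.2‖ ^ 2) = Real.pi ^ n := by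
    have := integral_prod_mul (μ := (volume : Measure (EuclideanSpace ℝ (Fin n))))
      (ν := (volume : Measure (EuclideanSpace ℝ (Fin n))))
      (fun x => Real.exp (-1 * ‖x‖ ^ 2)) (fun x => Real.exp (-1 * ‖x‖ ^ 2))
    rw [GaussianFourier.integral_rexp_neg_mul_sq_norm one_pos] at this
    refine this.trans ?_
    rw [← Real.rpow_add (by positivity)]
    simp
  rw [h3]
  push_cast
  ring

include hu ha cu ca cb bu ba bb hsym hc hgr in
/-- Kuperberg-type inequality -/
theorem kup_main : ENNReal.ofReal ((2 * Real.pi) ^ n) ≤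
    ∫⁻ z : EuclideanSpace ℝ (Fin n) × EuclideanSpace ℝ (Fin n),
      ENNReal.ofReal (Real.exp (-(∑ k, z.1 k * u k z.1 + ∑ k, z.2 k * u k z.2))) *
      ENNReal.ofReal |(Matrix.of fun k j => a k j z.1 + a k j z.2 : Matrix (Fin n) (Fin n) ℝ).det| := by
  have hd := kup_deriv u a b hu ha cu ca cb R bu ba bb hsym c C hc hgr
  have h01 := is_const_of_deriv_eq_zero (fun s => (hd s).differentiableAt) (fun s => (hd s).deriv) 0 1
  simp only [sub_zero, one_pow, sub_self, ne_eq, OfNat.ofNat_ne_zero, not_false_eq_true, zero_pow] at h01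
  rw [kup_one] at h01
  have h2 := enorm_integral_le_lintegral_enorm (μ := (volume : Measure (EuclideanSpace ℝ (Fin n) × EuclideanSpace ℝ (Fin n)))) (fun z => kE u 1 0 z * (kN a 1 0 z).det)
  rw [h01] at h2
  have h3 : ‖(((2 * Real.pi) ^ n : ℝ) : ℂ)‖ₑ = ENNReal.ofReal ((2 * Real.pi) ^ n) := by
    rw [← ofReal_norm_eq_enorm, Complex.norm_real, Real.norm_of_nonneg (by positivity)]
  rw [h3] at h2
  refine h2.trans (lintegral_mono fun z => ?_)
  rw [enorm_mul, ← ofReal_norm_eq_enorm, ← ofReal_norm_eq_enorm, kE_norm]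
  simp only [one_mul, zero_mul, add_zero]
  have h4 : kN a 1 0 z = (Matrix.of fun k j => a k j z.1 + a k j z.2 : Matrix (Fin n) (Fin n) ℝ).map (Complex.ofRealHom) := by
    ext i j; simp [kN]
  rw [h4, ← RingHom.mapMatrix_apply, ← RingHom.map_det]
  simp only [Complex.ofRealHom_eq_coe, Complex.norm_real, Real.norm_eq_abs]
  exact le_rfl

end Kup
section Mom
variable {n : ℕ}

/-- exponential moments over `L` -/
def mo (L : Set (EuclideanSpace ℝ (Fin n))) (g : EuclideanSpace ℝ (Fin n) → ℝ)
    (x : EuclideanSpace ℝ (Fin n)) : ℝ := ∫ y in L, g y * Real.exp ⟪x, y⟫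

/-- tilted measure -/
def tm (L : Set (EuclideanSpace ℝ (Fin n))) (x : EuclideanSpace ℝ (Fin n)) :
    Measure (EuclideanSpace ℝ (Fin n)) :=
  (volume.restrict L).tilted (fun y => ⟪x, y⟫)

/-- tilted expectation -/
def mr (L : Set (EuclideanSpace ℝ (Fin n))) (g : EuclideanSpace ℝ (Fin n) → ℝ)
    (x : EuclideanSpace ℝ (Fin n)) : ℝ := ∫ y, g y ∂(tm L x)

variable {L : Set (EuclideanSpace ℝ (Fin n))}

theorem cont_int (hL : IsCompact L) {g : EuclideanSpace ℝ (Fin n) → ℝ} (hg : Continuous g) :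
    Integrable g (volume.restrict L) := hg.continuousOn.integrableOn_compact hL

theorem vol_pos (hi : (interior L).Nonempty) : 0 < volume L :=
  (isOpen_interior.measure_pos volume hi).trans_le (measure_mono interior_subset)

theorem mo_one_pos (hL : IsCompact L) (hi : (interior L).Nonempty) (x : EuclideanSpace ℝ (Fin n)) :
    0 < mo L (fun _ => 1) x := by
  have : NeZero (volume.restrict L) := ⟨by
    rw [Ne, Measure.restrict_eq_zero]; exact (vol_pos hi).ne'⟩
  simpa [mo] using integral_exp_pos (μ := volume.restrict L) (f := fun y => ⟪x, y⟫) (cont_int hL (by fun_prop))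

theorem mr_eq (g : EuclideanSpace ℝ (Fin n) → ℝ) (x : EuclideanSpace ℝ (Fin n)) :
    mr L g x = mo L g x / mo L (fun _ => 1) x := by
  rw [mr, tm, integral_tilted, mo, mo, ← integral_div]
  congr 1; ext y
  simp only [smul_eq_mul, one_mul]
  ring

theorem tm_prob (hL : IsCompact L) (hi : (interior L).Nonempty) (x : EuclideanSpace ℝ (Fin n)) :
    IsProbabilityMeasure (tm L x) := by
  have : NeZero (volume.restrict L) := ⟨by
    rw [Ne, Measure.restrict_eq_zero]; exact (vol_pos hi).ne'⟩
  exact isProbabilityMeasure_tilted (cont_int hL (by fun_prop))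

theorem tm_int (hL : IsCompact L) (x : EuclideanSpace ℝ (Fin n))
    {g : EuclideanSpace ℝ (Fin n) → ℝ} (hg : Continuous g) : Integrable g (tm L x) := by
  rw [tm, integrable_tilted_iff (cont_int hL (by fun_prop))]
  exact cont_int hL (by fun_prop)

theorem tm_ae (hL : IsCompact L) (x : EuclideanSpace ℝ (Fin n)) : ∀ᵐ y ∂(tm L x), y ∈ L :=
  (tilted_absolutelyContinuous _ _).ae_le (ae_restrict_mem hL.measurableSet)

theorem mo_fderiv (hL : IsCompact L) {g : EuclideanSpace ℝ (Fin n) → ℝ} (hg : Continuous g)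
    (x : EuclideanSpace ℝ (Fin n)) :
    HasFDerivAt (mo L g) (∑ l, mo L (fun y => g y * y l) x • (EuclideanSpace.proj l : EuclideanSpace ℝ (Fin n) →L[ℝ] ℝ)) x := by
  obtain ⟨B, hB⟩ := hL.exists_bound_of_continuousOn (f := fun y => ‖g y‖ * ‖y‖) (by fun_prop)
  obtain ⟨B', hB'⟩ := hL.exists_bound_of_continuousOn (f := fun y : EuclideanSpace ℝ (Fin n) => y) (by fun_prop)
  have h1 := hasFDerivAt_integral_of_dominated_of_fderiv_le (𝕜 := ℝ) (μ := volume.restrict L)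
    (F := fun x y => g y * Real.exp ⟪x, y⟫) (F' := fun x y => (g y * Real.exp ⟪x, y⟫) • innerSL ℝ y)
    (x₀ := x) (s := ball x 1) (bound := fun _ => B * Real.exp ((‖x‖ + 1) * B')) (ball_mem_nhds x one_pos)
    (Filter.Eventually.of_forall fun x => (cont_int hL (by fun_prop)).aestronglyMeasurable)
    (cont_int hL (by fun_prop))
    (Continuous.aestronglyMeasurable (by fun_prop))
    ((ae_restrict_mem hL.measurableSet).mono fun y hy z hz => by
      have h2 := hB y hy
      have h3 := hB' y hy
      have h4 : ‖z‖ ≤ ‖x‖ + 1 := by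
        rw [mem_ball, dist_eq_norm] at hz
        have := norm_sub_norm_le z x
        linarith
      rw [norm_smul, innerSL_apply_norm, norm_mul, Real.norm_eq_abs (Real.exp _), Real.abs_exp]
      have h5 : ⟪z, y⟫ ≤ (‖x‖ + 1) * B' := (real_inner_le_norm z y).trans (by gcongr)
      rw [norm_mul, norm_norm, norm_norm] at h2
      calc ‖g y‖ * Real.exp ⟪z, y⟫ * ‖y‖ = ‖g y‖ * ‖y‖ * Real.exp ⟪z, y⟫ := by ring
        _ ≤ _ := by
          have : 0 ≤ ‖g y‖ * ‖y‖ := by positivity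
          exact mul_le_mul h2 (Real.exp_le_exp.2 h5) (Real.exp_pos _).le (this.trans h2))
    (by
      have : IsFiniteMeasure (volume.restrict L) := ⟨by simpa using hL.measure_lt_top⟩
      exact integrable_const _)
    (Filter.Eventually.of_forall fun y z hz => by
      have e1 : HasFDerivAt (fun z : EuclideanSpace ℝ (Fin n) => ⟪z, y⟫) (innerSL ℝ y) z := by
        have := (innerSL ℝ y).hasFDerivAt (x := z)
        refine this.congr_of_eventuallyEq (Filter.Eventually.of_forall fun w => ?_)
        simp [real_inner_comm]
      have e2 := (e1.exp).const_mul (g y)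
      rwa [smul_smul] at e2)
  convert! h1 using 1
  ext v
  rw [ContinuousLinearMap.integral_apply]
  · simp only [ContinuousLinearMap.sum_apply, ContinuousLinearMap.smul_apply, PiLp.proj_apply, smul_eq_mul, mo, innerSL_apply_apply]
    simp_rw [← integral_mul_const]
    rw [← integral_finsetSum]
    · congr 1; ext y
      rw [PiLp.inner_apply y v, Finset.mul_sum]
      refine Finset.sum_congr rfl fun l _ => ?_
      simp; ring
    · intro l _
      exact cont_int hL (by fun_prop)
  · exact (ContinuousOn.integrableOn_compact hL (by fun_prop))

theorem mr_fderiv (hL : IsCompact L) (hi : (interior L).Nonempty) {g : EuclideanSpace ℝ (Fin n) → ℝ}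
    (hg : Continuous g) (x : EuclideanSpace ℝ (Fin n)) :
    HasFDerivAt (mr L g) (∑ l, (mr L (fun y => g y * y l) x - mr L g x * mr L (fun y => y l) x) •
      (EuclideanSpace.proj l : EuclideanSpace ℝ (Fin n) →L[ℝ] ℝ)) x := by
  have hp := (mo_one_pos hL hi x).ne'
  have h1 := (mo_fderiv hL hg x).mul ((hasDerivAt_inv hp).comp_hasFDerivAt x (mo_fderiv hL (continuous_const (y := (1:ℝ))) x))
  have e : mr L g = fun x => mo L g x * (mo L (fun _ => 1) x)⁻¹ := by
    ext x; rw [mr_eq, div_eq_mul_inv]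
  rw [e]
  convert! h1 using 1
  ext v
  simp only [mr_eq, ContinuousLinearMap.sum_apply, ContinuousLinearMap.smul_apply, PiLp.proj_apply, smul_eq_mul,
    ContinuousLinearMap.add_apply, Function.comp, one_mul, Finset.mul_sum, ← Finset.sum_add_distrib]
  refine Finset.sum_congr rfl fun l _ => ?_
  field_simp
  ring

theorem mr_cont (hL : IsCompact L) (hi : (interior L).Nonempty) {g : EuclideanSpace ℝ (Fin n) → ℝ}
    (hg : Continuous g) : Continuous (mr L g) :=
  continuous_iff_continuousAt.2 fun x => (mr_fderiv hL hi hg x).continuousAt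

theorem mr_bound (hL : IsCompact L) (hi : (interior L).Nonempty) {g : EuclideanSpace ℝ (Fin n) → ℝ}
    {C : ℝ} (h : ∀ y ∈ L, |g y| ≤ C) (x : EuclideanSpace ℝ (Fin n)) : |mr L g x| ≤ C := by
  have := tm_prob hL hi x
  have := norm_integral_le_of_norm_le_const (μ := tm L x) (f := g) (C := C)
    ((tm_ae hL x).mono fun y hy => h y hy)
  simpa [mr] using this

/-- tilted mean -/
def mv (L : Set (EuclideanSpace ℝ (Fin n))) (x : EuclideanSpace ℝ (Fin n)) : EuclideanSpace ℝ (Fin n) :=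
  ∫ y, y ∂(tm L x)

theorem tm_int_id (hL : IsCompact L) (x : EuclideanSpace ℝ (Fin n)) : Integrable (fun y => y) (tm L x) := by
  rw [tm, integrable_tilted_iff (cont_int hL (by fun_prop))]
  exact (ContinuousOn.integrableOn_compact hL (by fun_prop))

theorem mv_apply (hL : IsCompact L) (x : EuclideanSpace ℝ (Fin n)) (k : Fin n) :
    mv L x k = mr L (fun y => y k) x := by
  have := (EuclideanSpace.proj k : EuclideanSpace ℝ (Fin n) →L[ℝ] ℝ).integral_comp_comm (tm_int_id hL x)
  simpa [mv, mr] using this.symm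

theorem mv_mem (hL : IsCompact L) (hi : (interior L).Nonempty) (hc : Convex ℝ L) (x : EuclideanSpace ℝ (Fin n)) :
    mv L x ∈ L := by
  have := tm_prob hL hi x
  exact hc.integral_mem hL.isClosed (tm_ae hL x) (tm_int_id hL x)

theorem mv_inner (hL : IsCompact L) (x v : EuclideanSpace ℝ (Fin n)) :
    ⟪v, mv L x⟫ = mr L (fun y => ⟪v, y⟫) x := by
  have := (innerSL ℝ v).integral_comp_comm (tm_int_id hL x)
  simpa [mv, mr] using this.symm

/-- matrix acting on Euclidean space -/
def mcl (A : Matrix (Fin n) (Fin n) ℝ) : EuclideanSpace ℝ (Fin n) →L[ℝ] EuclideanSpace ℝ (Fin n) :=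
  Matrix.toEuclideanCLM (𝕜 := ℝ) A

theorem mcl_apply (A : Matrix (Fin n) (Fin n) ℝ) (v : EuclideanSpace ℝ (Fin n)) (k : Fin n) :
    mcl A v k = ∑ l, A k l * v l := by
  simp [mcl, Matrix.ofLp_toEuclideanCLM, Matrix.mulVec, dotProduct]

theorem mcl_det (A : Matrix (Fin n) (Fin n) ℝ) : (mcl A).det = A.det := by
  have h : ((mcl A : EuclideanSpace ℝ (Fin n) →L[ℝ] EuclideanSpace ℝ (Fin n)) :
      EuclideanSpace ℝ (Fin n) →ₗ[ℝ] EuclideanSpace ℝ (Fin n)) =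
    Matrix.toLin (EuclideanSpace.basisFun (Fin n) ℝ).toBasis (EuclideanSpace.basisFun (Fin n) ℝ).toBasis A := by
    rw [← Matrix.toEuclideanLin_eq_toLin_orthonormal]
    rfl
  rw [ContinuousLinearMap.det, h, LinearMap.det_toLin]

theorem change_var (f : EuclideanSpace ℝ (Fin n) → EuclideanSpace ℝ (Fin n))
    (A : EuclideanSpace ℝ (Fin n) → Matrix (Fin n) (Fin n) ℝ)
    (hd : ∀ k x, HasFDerivAt (fun x => f x k) (∑ l, A x k l • (EuclideanSpace.proj l : EuclideanSpace ℝ (Fin n) →L[ℝ] ℝ)) x)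
    (hpos : ∀ x, ∀ v : EuclideanSpace ℝ (Fin n), v ≠ 0 → 0 < ∑ k, ∑ l, v k * A x k l * v l)
    (S : Set (EuclideanSpace ℝ (Fin n))) (hS : ∀ x, f x ∈ S) :
    ∫⁻ x, ENNReal.ofReal |(A x).det| ≤ volume S := by
  have h1 : ∀ x, HasFDerivAt f (mcl (A x)) x := by
    intro x
    rw [← hasFDerivWithinAt_univ, hasFDerivWithinAt_euclidean]
    intro k
    rw [hasFDerivWithinAt_univ]
    convert! hd k x using 1
    ext v
    simp [mcl_apply]
  have hinj : Function.Injective f := by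
    intro x1 x2 h12
    by_contra hne
    have hv : x1 - x2 ≠ 0 := sub_ne_zero.2 hne
    set v := x1 - x2 with hvd
    have h2 : ∀ t : ℝ, HasDerivAt (fun t : ℝ => ⟪v, f (x2 + t • v)⟫) (⟪v, mcl (A (x2 + t • v)) v⟫) t := by
      intro t
      have e1 : HasDerivAt (fun t : ℝ => x2 + t • v) v t := by
        simpa using ((hasDerivAt_id t).smul_const v).const_add x2
      have e2 := (h1 (x2 + t • v)).comp_hasDerivAt t e1
      have e3 := (innerSL ℝ v).hasFDerivAt.comp_hasDerivAt t e2
      simpa [Function.comp_def] using e3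
    have h3 : StrictMono (fun t : ℝ => ⟪v, f (x2 + t • v)⟫) := by
      refine strictMono_of_deriv_pos fun t => ?_
      rw [(h2 t).deriv, PiLp.inner_apply]
      refine (hpos (x2 + t • v) v hv).trans_eq (Finset.sum_congr rfl fun k _ => ?_)
      rw [mcl_apply]
      simp only [RCLike.inner_apply, conj_trivial, Finset.sum_mul]
      refine Finset.sum_congr rfl fun l _ => by ring
    have h4 := h3 zero_lt_one
    simp [hvd, h12] at h4
  have h5 := lintegral_abs_det_fderiv_eq_addHaar_image (volume : Measure (EuclideanSpace ℝ (Fin n)))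
    MeasurableSet.univ (fun x _ => (h1 x).hasFDerivWithinAt) hinj.injOn
  simp only [Measure.restrict_univ, mcl_det] at h5
  rw [h5]
  exact measure_mono (by rintro _ ⟨x, _, rfl⟩; exact hS x)

/-- tilted covariance -/
def cvm (L : Set (EuclideanSpace ℝ (Fin n))) (x : EuclideanSpace ℝ (Fin n)) : Matrix (Fin n) (Fin n) ℝ :=
  Matrix.of fun k j => mr L (fun y => y k * y j) x - mr L (fun y => y k) x * mr L (fun y => y j) x

theorem cvm_eq (hL : IsCompact L) (hi : (interior L).Nonempty) (x : EuclideanSpace ℝ (Fin n)) (k j : Fin n) :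
    cvm L x k j = ∫ y, (y k - mv L x k) * (y j - mv L x j) ∂(tm L x) := by
  have := tm_prob hL hi x
  have e : ∀ y : EuclideanSpace ℝ (Fin n), (y k - mv L x k) * (y j - mv L x j) =
    (y k * y j - mv L x j * y k - mv L x k * y j) + mv L x k * mv L x j := fun y => by ring
  simp only [e]
  rw [integral_add, integral_sub, integral_sub, integral_const_mul, integral_const_mul]
  · simp only [integral_const, cvm, Matrix.of_apply, mv_apply hL]
    simp only [mr]
    simp
    ring
  all_goals exact tm_int hL x (by fun_prop)

theorem cvm_quad (hL : IsCompact L) (hi : (interior L).Nonempty) (x : EuclideanSpace ℝ (Fin n)) (c d : Fin n → ℝ) :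
    ∑ k, ∑ j, c k * cvm L x k j * d j = ∫ y, (∑ k, c k * (y k - mv L x k)) * (∑ j, d j * (y j - mv L x j)) ∂(tm L x) := by
  simp only [cvm_eq hL hi, Finset.sum_mul_sum]
  rw [integral_finsetSum]
  · refine Finset.sum_congr rfl fun k _ => ?_
    rw [integral_finsetSum]
    · refine Finset.sum_congr rfl fun j _ => ?_
      rw [mul_comm (c k), mul_assoc, ← integral_mul_const]
      congr 1; ext y; ring
    · intro j _; exact tm_int hL x (by fun_prop)
  · intro j _; exact tm_int hL x (by fun_prop)

theorem cvm_pos (hL : IsCompact L) (hi : (interior L).Nonempty) (x v : EuclideanSpace ℝ (Fin n)) (hv : v ≠ 0) :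
    0 < ∑ k, ∑ l, v k * cvm L x k l * v l := by
  rw [cvm_quad hL hi x v v]
  have e : ∀ y : EuclideanSpace ℝ (Fin n), ∑ k, v k * (y k - mv L x k) = ⟪v, y⟫ - ⟪v, mv L x⟫ := by
    intro y
    rw [← inner_sub_right, PiLp.inner_apply]
    refine Finset.sum_congr rfl fun k _ => by simp [mul_comm]
  simp only [e]
  have hint : Integrable (fun y => (⟪v, y⟫ - ⟪v, mv L x⟫) * (⟪v, y⟫ - ⟪v, mv L x⟫)) (tm L x) :=
    tm_int hL x (by fun_prop)
  have hnn : 0 ≤ᵐ[tm L x] (fun y => (⟪v, y⟫ - ⟪v, mv L x⟫) * (⟪v, y⟫ - ⟪v, mv L x⟫)) :=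
    Filter.Eventually.of_forall fun y => mul_self_nonneg _
  refine lt_of_le_of_ne (integral_nonneg_of_ae hnn) fun h0 => ?_
  have h1 := (integral_eq_zero_iff_of_nonneg_ae hnn hint).1 h0.symm
  have h2 := (absolutelyContinuous_tilted (μ := volume.restrict L) (f := fun y => ⟪x, y⟫)
    (cont_int hL (by fun_prop))).ae_le h1
  have h3 := ae_restrict_of_ae_restrict_of_subset interior_subset h2
  have h4 := Measure.eqOn_open_of_ae_eq h3 isOpen_interior (by fun_prop) (by fun_prop)
  obtain ⟨y, hy⟩ := hi
  obtain ⟨ε, hε, hb⟩ := Metric.isOpen_iff.1 isOpen_interior y hy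
  have hvn : 0 < ‖v‖ := norm_pos_iff.2 hv
  have hy2 : y + (ε / 2 / ‖v‖) • v ∈ interior L := hb (by
    rw [mem_ball, dist_eq_norm, add_sub_cancel_left, norm_smul, Real.norm_eq_abs, abs_of_pos (by positivity)]
    field_simp
    linarith)
  have h5 := h4 hy
  have h6 := h4 hy2
  simp only [Pi.zero_apply, mul_self_eq_zero, inner_add_right, inner_smul_right, real_inner_self_eq_norm_sq] at h5 h6
  have : ε / 2 / ‖v‖ * ‖v‖ ^ 2 = 0 := by linarith
  have : 0 < ε / 2 / ‖v‖ * ‖v‖ ^ 2 := by positivity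
  linarith

theorem cvm_symm (x : EuclideanSpace ℝ (Fin n)) (k j : Fin n) : cvm L x k j = cvm L x j k := by
  simp only [cvm, Matrix.of_apply]
  rw [mul_comm (mr L (fun y => y k) x)]
  congr 2; ext y; ring

theorem cvm_posDef (hL : IsCompact L) (hi : (interior L).Nonempty) (x : EuclideanSpace ℝ (Fin n)) :
    (cvm L x).PosDef := by
  refine Matrix.PosDef.of_dotProduct_mulVec_pos ?_ fun v hv => ?_
  · ext i j; simp [cvm_symm x i j]
  · have := cvm_pos hL hi x (WithLp.toLp 2 v) (by simpa using hv)
    simpa [dotProduct, Matrix.mulVec, Finset.mul_sum, mul_assoc] using this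

theorem mv_fderiv (hL : IsCompact L) (hi : (interior L).Nonempty) (k : Fin n) (x : EuclideanSpace ℝ (Fin n)) :
    HasFDerivAt (fun x => mv L x k) (∑ l, cvm L x k l • (EuclideanSpace.proj l : EuclideanSpace ℝ (Fin n) →L[ℝ] ℝ)) x := by
  simp only [mv_apply hL]
  exact mr_fderiv hL hi (by fun_prop) x

theorem lint_det_le (hL : IsCompact L) (hi : (interior L).Nonempty) (hc : Convex ℝ L) :
    ∫⁻ x, ENNReal.ofReal |(cvm L x).det| ≤ volume L :=
  change_var (mv L) (cvm L) (mv_fderiv hL hi) (cvm_pos hL hi) L (mv_mem hL hi hc)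
end Mom
section Mom2
variable {n : ℕ} {L : Set (EuclideanSpace ℝ (Fin n))}

theorem mo_lower (hL : IsCompact L) (hc : Convex ℝ L)
    (hbar : ∫ y in L, y = 0) (x y0 : EuclideanSpace ℝ (Fin n)) (hy0 : y0 ∈ L) :
    volume.real L * Real.exp (⟪x, y0⟫ / 2) ≤ 2 ^ n * mo L (fun _ => 1) x := by
  set G : EuclideanSpace ℝ (Fin n) → ℝ := L.indicator (fun y => Real.exp ⟪x, y⟫) with hG
  have hGi : Integrable G := (integrable_indicator_iff hL.measurableSet).2 (cont_int hL (by fun_prop))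
  have h1 : ∫ y, G ((1/2:ℝ) • y0 + (1/2:ℝ) • y) = 2 ^ n * mo L (fun _ => 1) x := by
    have := Measure.integral_comp_smul (volume : Measure (EuclideanSpace ℝ (Fin n)))
      (fun z => G ((1/2:ℝ) • y0 + z)) (1/2)
    rw [this, integral_add_left_eq_self, hG, integral_indicator hL.measurableSet]
    simp [mo]
  have hGi2 : Integrable (fun y => G ((1/2:ℝ) • y0 + (1/2:ℝ) • y)) := by
    have := (hGi.comp_add_left ((1/2:ℝ) • y0)).comp_smul (R := (1/2:ℝ)) (by norm_num)
    exact this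
  rw [← h1]
  have h2 : ∫ y in L, Real.exp (⟪x, y0⟫ / 2) * (1 + (1/2) * ⟪x, y⟫) = volume.real L * Real.exp (⟪x, y0⟫ / 2) := by
    rw [integral_const_mul, integral_add (cont_int hL (by fun_prop)) (cont_int hL (by fun_prop)), integral_const_mul]
    have h3 : ∫ y in L, ⟪x, y⟫ = 0 := by
      have := (innerSL ℝ x).integral_comp_comm (μ := volume.restrict L) (φ := fun y => y)
        (ContinuousOn.integrableOn_compact hL (by fun_prop))
      rw [hbar] at this
      simpa using this
    rw [h3]
    simp [mul_comm]
  rw [← h2, ← integral_indicator hL.measurableSet]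
  refine integral_mono ((integrable_indicator_iff hL.measurableSet).2 (cont_int hL (by fun_prop))) hGi2 fun y => ?_
  by_cases hy : y ∈ L
  · have hm : (1/2:ℝ) • y0 + (1/2:ℝ) • y ∈ L := hc hy0 hy (by norm_num) (by norm_num) (by norm_num)
    simp only [hG, indicator_of_mem hy, indicator_of_mem hm]
    rw [inner_add_right, inner_smul_right, inner_smul_right, Real.exp_add]
    have := Real.add_one_le_exp (1/2 * ⟪x, y⟫)
    rw [show ⟪x, y0⟫ / 2 = 1/2 * ⟪x, y0⟫ by ring]
    gcongr
    linarith
  · simp only [indicator_of_notMem hy]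
    exact indicator_nonneg (fun _ _ => (Real.exp_pos _).le) _

theorem jensen_mean (hL : IsCompact L) (hi : (interior L).Nonempty) (x : EuclideanSpace ℝ (Fin n)) :
    Real.exp (-⟪x, mv L x⟫) * mo L (fun _ => 1) x ≤ volume.real L := by
  have hp := mo_one_pos hL hi x
  have := tm_prob hL hi x
  have h1 : mr L (fun y => Real.exp (-⟪x, y⟫)) x = volume.real L / mo L (fun _ => 1) x := by
    rw [mr_eq]
    congr 1
    simp [mo, ← Real.exp_add]
  rw [← le_div_iff₀ hp, ← h1, mr]
  have h2 : ∫ y, Real.exp (-⟪x, mv L x⟫) * ((1 + ⟪x, mv L x⟫) - ⟪x, y⟫) ∂(tm L x) = Real.exp (-⟪x, mv L x⟫) := by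
    rw [integral_const_mul, integral_sub (tm_int hL x (by fun_prop)) (tm_int hL x (by fun_prop))]
    have := mv_inner hL x x
    rw [mr] at this
    rw [← this]
    simp
  rw [← h2]
  refine integral_mono (tm_int hL x (by fun_prop)) (tm_int hL x (by fun_prop)) fun y => ?_
  have h3 := Real.add_one_le_exp (⟪x, mv L x⟫ - ⟪x, y⟫)
  have h4 : Real.exp (-⟪x, y⟫) = Real.exp (-⟪x, mv L x⟫) * Real.exp (⟪x, mv L x⟫ - ⟪x, y⟫) := by
    rw [← Real.exp_add]; congr 1; ring
  simp only [h4]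
  gcongr
  linarith

/-- support function -/
def hs (L : Set (EuclideanSpace ℝ (Fin n))) (x : EuclideanSpace ℝ (Fin n)) : ℝ :=
  sSup ((fun y => ⟪x, y⟫) '' L)

theorem hs_attain (hL : IsCompact L) (hn : L.Nonempty) (x : EuclideanSpace ℝ (Fin n)) :
    ∃ y ∈ L, hs L x = ⟪x, y⟫ := by
  obtain ⟨y, hy, h⟩ := (hL.image (f := fun y => ⟪x, y⟫) (by fun_prop)).sSup_mem (hn.image _)
  exact ⟨y, hy, h.symm⟩

theorem le_hs (hL : IsCompact L) (x y : EuclideanSpace ℝ (Fin n)) (hy : y ∈ L) : ⟪x, y⟫ ≤ hs L x :=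
  le_csSup (hL.image (f := fun y => ⟪x, y⟫) (by fun_prop)).bddAbove ⟨y, hy, rfl⟩

theorem hs_le_iff (hL : IsCompact L) (hn : L.Nonempty) (x : EuclideanSpace ℝ (Fin n)) (t : ℝ) :
    hs L x ≤ t ↔ ∀ y ∈ L, ⟪x, y⟫ ≤ t := by
  refine ⟨fun h y hy => (le_hs hL x y hy).trans h, fun h => ?_⟩
  obtain ⟨y, hy, e⟩ := hs_attain hL hn x
  rw [e]; exact h y hy

theorem mv_lower (hL : IsCompact L) (hi : (interior L).Nonempty) (hc : Convex ℝ L)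
    (hbar : ∫ y in L, y = 0) (x : EuclideanSpace ℝ (Fin n)) :
    hs L x / 2 - n * Real.log 2 ≤ ⟪x, mv L x⟫ := by
  obtain ⟨y0, hy0, e⟩ := hs_attain hL (hi.mono interior_subset) x
  have h1 := mo_lower hL hc hbar x y0 hy0
  have h2 := jensen_mean hL hi x
  have hv : 0 < volume.real L := ENNReal.toReal_pos (vol_pos hi).ne' hL.measure_lt_top.ne
  have hp := mo_one_pos hL hi x
  rw [← e] at h1
  have h3 : Real.exp (-⟪x, mv L x⟫) * Real.exp (hs L x / 2) ≤ 2 ^ n := by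
    have : volume.real L * (Real.exp (-⟪x, mv L x⟫) * Real.exp (hs L x / 2)) ≤ volume.real L * 2 ^ n := by
      calc _ = Real.exp (-⟪x, mv L x⟫) * (volume.real L * Real.exp (hs L x / 2)) := by ring
        _ ≤ Real.exp (-⟪x, mv L x⟫) * (2 ^ n * mo L (fun _ => 1) x) := by gcongr
        _ = 2 ^ n * (Real.exp (-⟪x, mv L x⟫) * mo L (fun _ => 1) x) := by ring
        _ ≤ 2 ^ n * volume.real L := by gcongr
        _ = _ := by ring
    exact le_of_mul_le_mul_left this hv
  rw [← Real.exp_add] at h3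
  have h4 := Real.log_le_log (Real.exp_pos _) h3
  rw [Real.log_exp, Real.log_pow] at h4
  linarith

theorem gauss_int (B : Matrix (Fin n) (Fin n) ℝ) (hB : B.det ≠ 0) (m : EuclideanSpace ℝ (Fin n)) :
    ∫ y, Real.exp (-(1/2) * ‖mcl B (y - m)‖ ^ 2) = |B.det|⁻¹ * (2 * Real.pi) ^ ((n:ℝ) / 2) := by
  rw [integral_sub_right_eq_self (fun y => Real.exp (-(1/2) * ‖mcl B y‖ ^ 2)) m]
  have hd : LinearMap.det ((mcl B : EuclideanSpace ℝ (Fin n) →L[ℝ] EuclideanSpace ℝ (Fin n)) :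
      EuclideanSpace ℝ (Fin n) →ₗ[ℝ] EuclideanSpace ℝ (Fin n)) = B.det := mcl_det B
  have h1 := Measure.map_linearMap_addHaar_eq_smul_addHaar (volume : Measure (EuclideanSpace ℝ (Fin n)))
    (f := (mcl B : EuclideanSpace ℝ (Fin n) →ₗ[ℝ] EuclideanSpace ℝ (Fin n))) (by rw [hd]; exact hB)
  have h2 := integral_map (μ := (volume : Measure (EuclideanSpace ℝ (Fin n)))) (φ := mcl B)
    (f := fun y => Real.exp (-(1/2) * ‖y‖ ^ 2)) (mcl B).continuous.aemeasurable
    (Continuous.aestronglyMeasurable (by fun_prop))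
  rw [← h2]
  rw [hd] at h1
  have h3 : Measure.map (mcl B) (volume : Measure (EuclideanSpace ℝ (Fin n))) = ENNReal.ofReal |B.det⁻¹| • volume := h1
  rw [h3, integral_smul_measure, GaussianFourier.integral_rexp_neg_mul_sq_norm (by norm_num)]
  rw [ENNReal.toReal_ofReal (abs_nonneg _), abs_inv, smul_eq_mul]
  congr 2
  · ring
  · simp

theorem trace_id (hL : IsCompact L) (hi : (interior L).Nonempty) (x : EuclideanSpace ℝ (Fin n))
    (B : Matrix (Fin n) (Fin n) ℝ) (hB : (cvm L x)⁻¹ = star B * B) :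
    ∫ y, ‖mcl B (y - mv L x)‖ ^ 2 ∂(tm L x) = n := by
  have hS := cvm_posDef hL hi x
  simp only [EuclideanSpace.real_norm_sq_eq, mcl_apply, PiLp.sub_apply]
  simp only [sq]
  rw [integral_finsetSum _ fun i _ => tm_int hL x (by fun_prop)]
  simp only [← cvm_quad hL hi x]
  have h1 : (cvm L x * (star B * B)).trace = n := by
    rw [← hB, Matrix.mul_nonsing_inv _ (hS.det_pos.ne'.isUnit)]
    simp
  rw [← h1, ← mul_assoc, Matrix.trace_mul_comm, ← mul_assoc]
  simp only [Matrix.trace, Matrix.diag, Matrix.mul_apply, Finset.sum_mul, Matrix.star_apply, star_trivial]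
  refine Finset.sum_congr rfl fun i _ => ?_
  rw [Finset.sum_comm]

theorem det_lower (hL : IsCompact L) (hi : (interior L).Nonempty) (hc : Convex ℝ L)
    (hbar : ∫ y in L, y = 0) (x : EuclideanSpace ℝ (Fin n)) :
    volume.real L ^ 2 * Real.exp (-hs L x) ≤ (8 * Real.pi * Real.exp 1) ^ n * |(cvm L x).det| := by
  have hS := cvm_posDef hL hi x
  have := tm_prob hL hi x
  have hp := mo_one_pos hL hi x
  have hv : 0 < volume.real L := ENNReal.toReal_pos (vol_pos hi).ne' hL.measure_lt_top.ne
  obtain ⟨B, hB⟩ : ∃ B : Matrix (Fin n) (Fin n) ℝ, (cvm L x)⁻¹ = star B * B := by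
    open scoped MatrixOrder in
    have h1 : (0 : Matrix (Fin n) (Fin n) ℝ) ≤ (cvm L x)⁻¹ := Matrix.nonneg_iff_posSemidef.2 hS.inv.posSemidef
    exact CStarAlgebra.nonneg_iff_eq_star_mul_self.1 h1
  have hBd : B.det ^ 2 * (cvm L x).det = 1 := by
    have h1 := congrArg Matrix.det hB
    rw [Matrix.det_mul, Matrix.star_eq_conjTranspose, Matrix.det_conjTranspose, Matrix.det_nonsing_inv,
      Ring.inverse_eq_inv'] at h1
    simp only [star_trivial] at h1
    rw [sq, ← h1, inv_mul_cancel₀ hS.det_pos.ne']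
  have hB0 : B.det ≠ 0 := by rintro h; simp [h] at hBd
  set m := mv L x with hm
  have hg := gauss_int B hB0 m
  have hgi : Integrable (fun y => Real.exp (-(1/2) * ‖mcl B (y - m)‖ ^ 2)) := by
    by_contra h
    rw [integral_undef h] at hg
    have : 0 < |B.det|⁻¹ * (2 * Real.pi) ^ ((n:ℝ) / 2) := by positivity
    linarith
  have htr := trace_id hL hi x B hB
  -- Jensen
  have hJ : Real.exp (-(n/2 : ℝ)) ≤ mr L (fun y => Real.exp (-(1/2) * ‖mcl B (y - m)‖ ^ 2)) x := by
    have h2 : ∫ y, Real.exp (-(n/2:ℝ)) * ((1 + n/2) - (1/2) * ‖mcl B (y - m)‖ ^ 2) ∂(tm L x) = Real.exp (-(n/2:ℝ)) := by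
      rw [integral_const_mul, integral_sub (tm_int hL x (by fun_prop)) (tm_int hL x (by fun_prop)), integral_const_mul, htr]
      simp
      ring
    rw [← h2, mr]
    refine integral_mono (tm_int hL x (by fun_prop)) (tm_int hL x (by fun_prop)) fun y => ?_
    have h3 := Real.add_one_le_exp ((n/2:ℝ) - (1/2) * ‖mcl B (y - m)‖ ^ 2)
    have h4 : Real.exp (-(1/2) * ‖mcl B (y - m)‖ ^ 2) = Real.exp (-(n/2:ℝ)) * Real.exp ((n/2:ℝ) - (1/2) * ‖mcl B (y - m)‖ ^ 2) := by
      rw [← Real.exp_add]; congr 1; ring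
    simp only [h4]
    gcongr
    linarith
  rw [mr_eq, le_div_iff₀ hp] at hJ
  have h5 : mo L (fun y => Real.exp (-(1/2) * ‖mcl B (y - m)‖ ^ 2)) x ≤
      Real.exp (hs L x) * (|B.det|⁻¹ * (2 * Real.pi) ^ ((n:ℝ) / 2)) := by
    rw [← hg, mo, ← integral_const_mul]
    refine le_trans ?_ (setIntegral_le_integral (s := L) (hgi.const_mul _) (Filter.Eventually.of_forall fun y => by positivity))
    refine setIntegral_mono_on (cont_int hL (by fun_prop)) (hgi.const_mul _).integrableOn hL.measurableSet fun y hy => ?_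
    rw [mul_comm]
    gcongr
    exact le_hs hL x y hy
  obtain ⟨y0, hy0, e⟩ := hs_attain hL (hi.mono interior_subset) x
  have h6 := mo_lower hL hc hbar x y0 hy0
  rw [← e] at h6
  -- combine: exp(-n/2) * vol * exp(h/2) ≤ 2^n * exp h * |det B|⁻¹ (2π)^{n/2}
  have h7 : Real.exp (-(n/2:ℝ)) * volume.real L * |B.det| ≤ 2 ^ n * (2 * Real.pi) ^ ((n:ℝ) / 2) * Real.exp (hs L x / 2) := by
    have hb : 0 < |B.det| := abs_pos.2 hB0
    have h8 : Real.exp (-(n/2:ℝ)) * (volume.real L * Real.exp (hs L x / 2)) ≤ 2 ^ n * (Real.exp (hs L x) * (|B.det|⁻¹ * (2 * Real.pi) ^ ((n:ℝ) / 2))) := by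
      calc _ ≤ Real.exp (-(n/2:ℝ)) * (2 ^ n * mo L (fun _ => 1) x) := by gcongr
        _ = 2 ^ n * (Real.exp (-(n/2:ℝ)) * mo L (fun _ => 1) x) := by ring
        _ ≤ _ := mul_le_mul_of_nonneg_left (hJ.trans h5) (by positivity)
    have h9 : Real.exp (hs L x) = Real.exp (hs L x / 2) * Real.exp (hs L x / 2) := by
      rw [← Real.exp_add]; congr 1; ring
    rw [h9] at h8
    have h10 := Real.exp_pos (hs L x / 2)
    refine le_of_mul_le_mul_right ?_ h10
    have h11 := mul_le_mul_of_nonneg_right h8 hb.le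
    calc _ = Real.exp (-(n/2:ℝ)) * (volume.real L * Real.exp (hs L x / 2)) * |B.det| := by ring
      _ ≤ _ := h11
      _ = _ := by field_simp
  have h12 := pow_le_pow_left₀ (by positivity) h7 2
  have e1 : Real.exp (-(n/2:ℝ)) ^ 2 = (Real.exp 1 ^ n)⁻¹ := by
    rw [← Real.exp_nat_mul, ← Real.exp_nat_mul, ← Real.exp_neg]; congr 1; push_cast; ring
  have e2 : Real.exp (hs L x / 2) ^ 2 = (Real.exp (- hs L x))⁻¹ := by
    rw [← Real.exp_nat_mul, ← Real.exp_neg]; congr 1; push_cast; ring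
  have e3 : ((2 * Real.pi) ^ ((n:ℝ) / 2)) ^ 2 = (2 * Real.pi) ^ n := by
    rw [← Real.rpow_natCast, ← Real.rpow_mul (by positivity), ← Real.rpow_natCast]; congr 1; push_cast; ring
  rw [mul_pow, mul_pow, mul_pow, mul_pow, sq_abs, e1, e2, e3] at h12
  have hdp := hS.det_pos
  rw [abs_of_pos hdp]
  have h13 : B.det ^ 2 = ((cvm L x).det)⁻¹ := eq_inv_of_mul_eq_one_left hBd
  rw [h13] at h12
  have e4 : (8 * Real.pi * Real.exp 1) ^ n = (2 ^ n) ^ 2 * (2 * Real.pi) ^ n * Real.exp 1 ^ n := by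
    rw [← pow_mul, mul_comm n 2, pow_mul, ← mul_pow, ← mul_pow]; congr 1; ring
  rw [e4]
  have h14 := mul_le_mul_of_nonneg_right h12 (show 0 ≤ Real.exp 1 ^ n * (cvm L x).det * Real.exp (-hs L x) by positivity)
  calc _ = (Real.exp 1 ^ n)⁻¹ * volume.real L ^ 2 * (cvm L x).det⁻¹ * (Real.exp 1 ^ n * (cvm L x).det * Real.exp (-hs L x)) := by
        field_simp
    _ ≤ _ := h14
    _ = _ := by field_simp

end Mom2
section Fin8
variable {n : ℕ} {L : Set (EuclideanSpace ℝ (Fin n))}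

theorem partA (hL : IsCompact L) (hi : (interior L).Nonempty) (hc : Convex ℝ L)
    (hbar : ∫ y in L, y = 0) :
    volume L * ∫⁻ x, ENNReal.ofReal (Real.exp (-hs L x)) ≤ ENNReal.ofReal ((8 * Real.pi * Real.exp 1) ^ n) := by
  have hv0 := (vol_pos hi).ne'
  have hvt : volume L ≠ ⊤ := hL.measure_lt_top.ne
  have hreal : ENNReal.ofReal (volume.real L) = volume L := ENNReal.ofReal_toReal hvt
  have h1 : volume L * (volume L * ∫⁻ x, ENNReal.ofReal (Real.exp (-hs L x))) ≤
      volume L * ENNReal.ofReal ((8 * Real.pi * Real.exp 1) ^ n) := by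
    rw [← mul_assoc, ← lintegral_const_mul' _ _ (ENNReal.mul_ne_top hvt hvt), mul_comm (volume L) (ENNReal.ofReal _)]
    calc _ ≤ ∫⁻ x, ENNReal.ofReal ((8 * Real.pi * Real.exp 1) ^ n) * ENNReal.ofReal |(cvm L x).det| := by
          refine lintegral_mono fun x => ?_
          rw [← ENNReal.ofReal_mul (by positivity)]
          refine le_trans (le_of_eq ?_) (ENNReal.ofReal_le_ofReal (det_lower hL hi hc hbar x))
          rw [ENNReal.ofReal_mul (by positivity), sq, ENNReal.ofReal_mul (by positivity), hreal]
      _ = ENNReal.ofReal ((8 * Real.pi * Real.exp 1) ^ n) * ∫⁻ x, ENNReal.ofReal |(cvm L x).det| :=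
          lintegral_const_mul' _ _ ENNReal.ofReal_ne_top
      _ ≤ _ := by gcongr; exact lint_det_le hL hi hc
  exact (ENNReal.mul_le_mul_iff_right hv0 hvt).1 h1

theorem hs_meas (hL : IsCompact L) (hn : L.Nonempty) : Measurable (hs L) := by
  refine measurable_of_Iic fun t => ?_
  have : hs L ⁻¹' Iic t = ⋂ y ∈ L, {x | ⟪x, y⟫ ≤ t} := by
    ext x; simp [hs_le_iff hL hn]
  rw [this]
  exact (isClosed_biInter fun y _ => isClosed_le (by fun_prop) continuous_const).measurableSet

theorem layer (G : EuclideanSpace ℝ (Fin n) → ℝ) (hG : Measurable G) (h0 : ∀ x, 0 ≤ G x)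
    (S : Set (EuclideanSpace ℝ (Fin n))) (hS : ∀ t : ℝ, 0 < t → {x | G x ≤ t} = t • S) :
    ∫⁻ x, ENNReal.ofReal (Real.exp (-G x)) =
      (∫⁻ t in Ioi (0:ℝ), ENNReal.ofReal (Real.exp (-t) * t ^ n)) * volume S := by
  have h1 : ∀ x, ENNReal.ofReal (Real.exp (-G x)) =
      ∫⁻ t in Ioi (0:ℝ), (Ici (G x)).indicator (fun t => ENNReal.ofReal (Real.exp (-t))) t := by
    intro x
    rw [← lintegral_congr_ae (ae_restrict_of_ae (indicator_ae_eq_of_ae_eq_set (Ioi_ae_eq_Ici (a := G x)))),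
      lintegral_indicator measurableSet_Ioi, Measure.restrict_restrict measurableSet_Ioi,
      Ioi_inter_Ioi, sup_of_le_left (h0 x),
      ← ofReal_integral_eq_lintegral_ofReal (integrableOn_exp_neg_Ioi _) (Filter.Eventually.of_forall fun t => (Real.exp_pos _).le),
      integral_exp_neg_Ioi]
  simp only [h1]
  have hmeas : Measurable (fun z : EuclideanSpace ℝ (Fin n) × ℝ =>
      (Ici (G z.1)).indicator (fun t => ENNReal.ofReal (Real.exp (-t))) z.2) := by
    have : (fun z : EuclideanSpace ℝ (Fin n) × ℝ =>
      (Ici (G z.1)).indicator (fun t => ENNReal.ofReal (Real.exp (-t))) z.2) =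
      {z : EuclideanSpace ℝ (Fin n) × ℝ | G z.1 ≤ z.2}.indicator (fun z => ENNReal.ofReal (Real.exp (-z.2))) := by
      ext z; simp [indicator]
    rw [this]
    exact Measurable.indicator (by fun_prop) (measurableSet_le (by fun_prop) (by fun_prop))
  rw [lintegral_lintegral_swap (hmeas.aemeasurable), ← lintegral_mul_const _ (by fun_prop)]
  refine setLIntegral_congr_fun measurableSet_Ioi fun t ht => ?_
  have ht : 0 < t := ht
  have h2 : ∀ x, (Ici (G x)).indicator (fun t => ENNReal.ofReal (Real.exp (-t))) t =
      {x | G x ≤ t}.indicator (fun _ => ENNReal.ofReal (Real.exp (-t))) x := by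
    intro x; simp [indicator]
  simp only [h2]
  rw [lintegral_indicator_const (measurableSet_le hG measurable_const), hS t ht,
    Measure.addHaar_smul, finrank_euclideanSpace_fin, abs_of_pos (by positivity),
    ENNReal.ofReal_mul (by positivity), mul_assoc]

theorem gam_ne (n : ℕ) : (∫⁻ t in Ioi (0:ℝ), ENNReal.ofReal (Real.exp (-t) * t ^ n)) ≠ 0 ∧
    (∫⁻ t in Ioi (0:ℝ), ENNReal.ofReal (Real.exp (-t) * t ^ n)) ≠ ⊤ := by
  have h := Real.GammaIntegral_convergent (s := (n:ℝ)+1) (by positivity)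
  simp only [add_sub_cancel_right, Real.rpow_natCast] at h
  have hp : 0 ≤ᵐ[volume.restrict (Ioi (0:ℝ))] fun t => Real.exp (-t) * t ^ n := by
    filter_upwards [ae_restrict_mem measurableSet_Ioi] with t ht
    have ht : 0 < t := ht
    simp only [Pi.zero_apply]; positivity
  have hg := Real.Gamma_eq_integral (s := (n:ℝ)+1) (by positivity)
  simp only [add_sub_cancel_right, Real.rpow_natCast] at hg
  rw [← ofReal_integral_eq_lintegral_ofReal h hp, ← hg]
  exact ⟨by simpa using Real.Gamma_pos_of_pos (by positivity), ENNReal.ofReal_ne_top⟩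

theorem rs (hL : IsCompact L) (h0 : volume L ≠ 0) (hc : Convex ℝ L) :
    volume (L - L) ≤ ENNReal.ofReal (4 ^ n) * volume L := by
  have hLm := hL.isClosed.measurableSet
  have hvt : volume L ≠ ⊤ := hL.measure_lt_top.ne
  have hD : IsCompact (L - L) := by rw [sub_eq_add_neg]; exact hL.add hL.neg
  have hDm := hD.isClosed.measurableSet
  have hpow : volume ((2⁻¹ : ℝ) • (L - L)) = ENNReal.ofReal ((2⁻¹) ^ n) * volume (L - L) := by
    rw [Measure.addHaar_smul, finrank_euclideanSpace_fin, abs_of_pos (by positivity)]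
  -- Tonelli
  have hT : ∫⁻ z, volume (L ∩ (fun y => y - z) ⁻¹' L) = volume L * volume L := by
    have h1 : ∀ z, volume (L ∩ (fun y => y - z) ⁻¹' L) =
        ∫⁻ y, L.indicator 1 y * L.indicator 1 (y - z) := by
      intro z
      rw [← lintegral_indicator_one (hLm.inter (hLm.preimage (by fun_prop)))]
      refine lintegral_congr fun y => ?_
      simp only [indicator]; by_cases h : y ∈ L <;> by_cases h' : y - z ∈ L <;> simp [h, h']
    simp only [h1]
    have hm : Measurable (L.indicator (1 : EuclideanSpace ℝ (Fin n) → ℝ≥0∞)) :=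
      measurable_one.indicator hLm
    rw [lintegral_lintegral_swap (by
      refine Measurable.aemeasurable ?_
      exact (hm.comp measurable_snd).mul (hm.comp (measurable_snd.sub measurable_fst)))]
    have h2 : ∀ y, ∫⁻ z, L.indicator (1 : EuclideanSpace ℝ (Fin n) → ℝ≥0∞) y * L.indicator 1 (y - z) = L.indicator 1 y * volume L := by
      intro y
      rw [lintegral_const_mul _ (show Measurable fun z => L.indicator (1 : EuclideanSpace ℝ (Fin n) → ℝ≥0∞) (y - z) from hm.comp (measurable_const.sub measurable_id))]
      rw [lintegral_sub_left_eq_self (fun z => L.indicator (1 : EuclideanSpace ℝ (Fin n) → ℝ≥0∞) z) y, lintegral_indicator_one hLm]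
    simp only [h2]
    rw [lintegral_mul_const _ hm, lintegral_indicator_one hLm]
  have hlow : ∀ z ∈ (2⁻¹ : ℝ) • (L - L), ENNReal.ofReal ((2⁻¹) ^ n) * volume L ≤ volume (L ∩ (fun y => y - z) ⁻¹' L) := by
    rintro z ⟨w, ⟨a, ha, b, hb, rfl⟩, rfl⟩
    have h3 : volume ((fun y => (2⁻¹ : ℝ) • a + y) '' ((2⁻¹ : ℝ) • L)) = ENNReal.ofReal ((2⁻¹) ^ n) * volume L := by
      rw [image_add_left, measure_preimage_add, Measure.addHaar_smul, finrank_euclideanSpace_fin, abs_of_pos (by positivity)]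
    rw [← h3]
    refine measure_mono ?_
    rintro _ ⟨_, ⟨y, hy, rfl⟩, rfl⟩
    refine ⟨hc ha hy (by norm_num) (by norm_num) (by norm_num), ?_⟩
    have := hc hb hy (a := (2⁻¹ : ℝ)) (b := (2⁻¹ : ℝ)) (by norm_num) (by norm_num) (by norm_num)
    simp only [mem_preimage]
    convert this using 1
    simp only [smul_sub]; abel
  have hmain : ENNReal.ofReal ((2⁻¹) ^ n) * volume L * (ENNReal.ofReal ((2⁻¹) ^ n) * volume (L - L)) ≤ volume L * volume L := by
    rw [← hT, ← hpow, ← setLIntegral_const]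
    refine (setLIntegral_mono' ?_ hlow).trans (setLIntegral_le_lintegral _ _)
    exact (hD.smul _).isClosed.measurableSet
  have e4 : ENNReal.ofReal ((4:ℝ) ^ n) * (ENNReal.ofReal ((2⁻¹:ℝ) ^ n) * ENNReal.ofReal ((2⁻¹:ℝ) ^ n)) = 1 := by
    rw [← ENNReal.ofReal_mul (by positivity), ← ENNReal.ofReal_mul (by positivity), ← mul_pow, ← mul_pow]
    norm_num
  have h5 : volume L * (ENNReal.ofReal ((2⁻¹:ℝ) ^ n) * ENNReal.ofReal ((2⁻¹:ℝ) ^ n) * volume (L - L)) ≤ volume L * volume L := by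
    refine le_trans (le_of_eq ?_) hmain
    ring
  have h6 := (ENNReal.mul_le_mul_iff_right h0 hvt).1 h5
  calc volume (L - L) = ENNReal.ofReal ((4:ℝ) ^ n) * (ENNReal.ofReal ((2⁻¹:ℝ) ^ n) * ENNReal.ofReal ((2⁻¹:ℝ) ^ n)) * volume (L - L) := by rw [e4, one_mul]
    _ = ENNReal.ofReal ((4:ℝ) ^ n) * (ENNReal.ofReal ((2⁻¹:ℝ) ^ n) * ENNReal.ofReal ((2⁻¹:ℝ) ^ n) * volume (L - L)) := by ring
    _ ≤ _ := by gcongr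
end Fin8
section Fin9
variable {n : ℕ} {L : Set (EuclideanSpace ℝ (Fin n))}

theorem fd_refl (f : EuclideanSpace ℝ (Fin n) → ℝ) (d : Fin n → EuclideanSpace ℝ (Fin n) → ℝ)
    (h : ∀ x, HasFDerivAt f (∑ l, d l x • (EuclideanSpace.proj l : EuclideanSpace ℝ (Fin n) →L[ℝ] ℝ)) x)
    (p x : EuclideanSpace ℝ (Fin n)) :
    HasFDerivAt (fun x => f (p - x))
      (∑ l, (-d l (p - x)) • (EuclideanSpace.proj l : EuclideanSpace ℝ (Fin n) →L[ℝ] ℝ)) x := by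
  have h1 := (h (p - x)).comp x ((hasFDerivAt_id x).const_sub p)
  refine h1.congr_fderiv ?_
  ext v
  simp [ContinuousLinearMap.sum_apply, Finset.sum_neg_distrib]

theorem fd_line (f : EuclideanSpace ℝ (Fin n) → ℝ) (d : Fin n → ℝ) (x v : EuclideanSpace ℝ (Fin n))
    (h : HasFDerivAt f (∑ l, d l • (EuclideanSpace.proj l : EuclideanSpace ℝ (Fin n) →L[ℝ] ℝ)) x) :
    HasLineDerivAt ℝ f (∑ l, d l * v l) x v := by
  have := h.hasLineDerivAt v
  simpa [ContinuousLinearMap.sum_apply] using this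

def ct (L : Set (EuclideanSpace ℝ (Fin n))) (k j l : Fin n) (x : EuclideanSpace ℝ (Fin n)) : ℝ :=
  mr L (fun y => y k * y j * y l) x - mr L (fun y => y k * y j) x * mr L (fun y => y l) x
    - mr L (fun y => y k * y l) x * mr L (fun y => y j) x
    - mr L (fun y => y k) x * mr L (fun y => y j * y l) x
    + 2 * (mr L (fun y => y k) x * mr L (fun y => y j) x * mr L (fun y => y l) x)

theorem cvm_fderiv (hL : IsCompact L) (hi : (interior L).Nonempty) (k j : Fin n) (x : EuclideanSpace ℝ (Fin n)) :
    HasFDerivAt (fun x => cvm L x k j)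
      (∑ l, ct L k j l x • (EuclideanSpace.proj l : EuclideanSpace ℝ (Fin n) →L[ℝ] ℝ)) x := by
  have h := (mr_fderiv hL hi (g := fun y => y k * y j) (by fun_prop) x).sub
    ((mr_fderiv hL hi (g := fun y => y k) (by fun_prop) x).mul (mr_fderiv hL hi (g := fun y => y j) (by fun_prop) x))
  refine h.congr_fderiv ?_
  ext v
  simp only [ContinuousLinearMap.sum_apply, ContinuousLinearMap.sub_apply, ContinuousLinearMap.add_apply,
    ContinuousLinearMap.smul_apply, smul_eq_mul, Finset.mul_sum, ← Finset.sum_sub_distrib, ← Finset.sum_add_distrib, ct]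
  refine Finset.sum_congr rfl fun l _ => ?_
  ring

theorem ct_symm (k j l : Fin n) (x : EuclideanSpace ℝ (Fin n)) : ct L k j l x = ct L k l j x := by
  simp only [ct]
  have e1 : (fun y : EuclideanSpace ℝ (Fin n) => y k * y j * y l) = fun y => y k * y l * y j := by ext y; ring
  have e2 : (fun y : EuclideanSpace ℝ (Fin n) => y j * y l) = fun y => y l * y j := by ext y; ring
  rw [e1, e2]; ring

theorem ct_cont (hL : IsCompact L) (hi : (interior L).Nonempty) (k j l : Fin n) : Continuous (ct L k j l) := by
  have h1 := mr_cont hL hi (g := fun y => y k * y j * y l) (by fun_prop)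
  have h2 := mr_cont hL hi (g := fun y => y k * y j) (by fun_prop)
  have h3 := mr_cont hL hi (g := fun y => y k * y l) (by fun_prop)
  have h4 := mr_cont hL hi (g := fun y => y j * y l) (by fun_prop)
  have h5 := mr_cont hL hi (g := fun y => y k) (by fun_prop)
  have h6 := mr_cont hL hi (g := fun y => y j) (by fun_prop)
  have h7 := mr_cont hL hi (g := fun y => y l) (by fun_prop)
  unfold ct
  fun_prop

theorem cvm_cont (hL : IsCompact L) (hi : (interior L).Nonempty) (k j : Fin n) : Continuous (fun x => cvm L x k j) :=
  continuous_iff_continuousAt.2 fun x => (cvm_fderiv hL hi k j x).continuousAt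

theorem mv_cont (hL : IsCompact L) (hi : (interior L).Nonempty) (k : Fin n) : Continuous (fun x => mv L x k) :=
  continuous_iff_continuousAt.2 fun x => (mv_fderiv hL hi k x).continuousAt

theorem abs_mul_le' {a b A B : ℝ} (ha : |a| ≤ A) (hb : |b| ≤ B) : |a * b| ≤ A * B := by
  rw [abs_mul]; exact mul_le_mul ha hb (abs_nonneg _) ((abs_nonneg _).trans ha)

theorem bounds (hL : IsCompact L) (hi : (interior L).Nonempty) : ∃ R : ℝ,
    (∀ k x, |mv L x k| ≤ R) ∧ (∀ k j x, |cvm L x k j| ≤ R) ∧ (∀ k j l x, |ct L k j l x| ≤ R) := by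
  obtain ⟨R0, hR0⟩ := hL.isBounded.exists_norm_le
  set R := max R0 1 with hR
  have h1 : 1 ≤ R := le_max_right _ _
  have hc : ∀ y ∈ L, ∀ k, |y k| ≤ R := fun y hy k =>
    (PiLp.norm_apply_le y k).trans ((hR0 y hy).trans (le_max_left _ _))
  have b1 : ∀ k x, |mr L (fun y => y k) x| ≤ R := fun k x => mr_bound hL hi (fun y hy => hc y hy k) x
  have b2 : ∀ k j x, |mr L (fun y => y k * y j) x| ≤ R * R := fun k j x =>
    mr_bound hL hi (fun y hy => abs_mul_le' (hc y hy k) (hc y hy j)) x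
  have b3 : ∀ k j l x, |mr L (fun y => y k * y j * y l) x| ≤ R * R * R := fun k j l x =>
    mr_bound hL hi (fun y hy => abs_mul_le' (abs_mul_le' (hc y hy k) (hc y hy j)) (hc y hy l)) x
  have hRR : R ≤ R * R := by nlinarith
  have hRRR : R * R ≤ R * R * R := by nlinarith [mul_self_nonneg R]
  refine ⟨6 * (R * R * R), fun k x => ?_, fun k j x => ?_, fun k j l x => ?_⟩
  · rw [mv_apply hL]; linarith [b1 k x]
  · have h := abs_le.1 (b2 k j x)
    have h' := abs_le.1 (abs_mul_le' (b1 k x) (b1 j x))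
    simp only [cvm, Matrix.of_apply]
    rw [abs_le]; constructor <;> linarith [h.1, h.2, h'.1, h'.2]
  · have h1 := abs_le.1 (b3 k j l x)
    have h2 := abs_le.1 (abs_mul_le' (b2 k j x) (b1 l x))
    have h3 := abs_le.1 (abs_mul_le' (b2 k l x) (b1 j x))
    have h4 := abs_le.1 (abs_mul_le' (b1 k x) (b2 j l x))
    have h5 := abs_le.1 (abs_mul_le' (abs_mul_le' (b1 k x) (b1 j x)) (b1 l x))
    simp only [ct]
    rw [abs_le]; constructor <;> linarith [h1.1, h2.1, h3.1, h4.1, h5.1, h1.2, h2.2, h3.2, h4.2, h5.2]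

/-- the symmetrised gradient map -/
def uu (L : Set (EuclideanSpace ℝ (Fin n))) (x : EuclideanSpace ℝ (Fin n)) : EuclideanSpace ℝ (Fin n) :=
  mv L x - mv L (-x)

def aa (L : Set (EuclideanSpace ℝ (Fin n))) (x : EuclideanSpace ℝ (Fin n)) (k j : Fin n) : ℝ :=
  cvm L x k j + cvm L (-x) k j

theorem uu_fderiv (hL : IsCompact L) (hi : (interior L).Nonempty) (k : Fin n) (x : EuclideanSpace ℝ (Fin n)) :
    HasFDerivAt (fun x => uu L x k)
      (∑ l, aa L x k l • (EuclideanSpace.proj l : EuclideanSpace ℝ (Fin n) →L[ℝ] ℝ)) x := by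
  have h2 := fd_refl (fun x => mv L x k) (fun l x => cvm L x k l) (mv_fderiv hL hi k) 0 x
  simp only [zero_sub] at h2
  have h := (mv_fderiv hL hi k x).sub h2
  refine h.congr_fderiv ?_
  simp only [← Finset.sum_sub_distrib, ← sub_smul, aa, sub_neg_eq_add]

theorem aa_fderiv (hL : IsCompact L) (hi : (interior L).Nonempty) (k j : Fin n) (x : EuclideanSpace ℝ (Fin n)) :
    HasFDerivAt (fun x => aa L x k j)
      (∑ l, (ct L k j l x - ct L k j l (-x)) • (EuclideanSpace.proj l : EuclideanSpace ℝ (Fin n) →L[ℝ] ℝ)) x := by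
  have h2 := fd_refl (fun x => cvm L x k j) (fun l x => ct L k j l x) (cvm_fderiv hL hi k j) 0 x
  simp only [zero_sub] at h2
  have h := (cvm_fderiv hL hi k j x).add h2
  refine h.congr_fderiv ?_
  simp only [← Finset.sum_add_distrib, ← add_smul, ← sub_eq_add_neg]

theorem aa_pos (hL : IsCompact L) (hi : (interior L).Nonempty) (x v : EuclideanSpace ℝ (Fin n)) (hv : v ≠ 0) :
    0 < ∑ k, ∑ l, v k * aa L x k l * v l := by
  have := add_pos (cvm_pos hL hi x v hv) (cvm_pos hL hi (-x) v hv)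
  simpa only [aa, mul_add, add_mul, Finset.sum_add_distrib] using this

theorem inner_vol (hL : IsCompact L) (hi : (interior L).Nonempty) (hc : Convex ℝ L) (p : EuclideanSpace ℝ (Fin n)) :
    ∫⁻ x, ENNReal.ofReal |(Matrix.of fun k j => aa L x k j + aa L (p - x) k j : Matrix (Fin n) (Fin n) ℝ).det|
      ≤ ENNReal.ofReal (8 ^ n) * volume L := by
  have h := change_var (fun x => uu L x - uu L (p - x)) (fun x => Matrix.of fun k j => aa L x k j + aa L (p - x) k j)
    (fun k x => ?_) (fun x v hv => ?_) ((2:ℝ) • (L - L)) (fun x => ?_)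
  · refine h.trans ?_
    rw [Measure.addHaar_smul, finrank_euclideanSpace_fin, abs_of_pos (by positivity)]
    calc _ ≤ ENNReal.ofReal (2 ^ n) * (ENNReal.ofReal (4 ^ n) * volume L) := by
          gcongr; exact rs hL (vol_pos hi).ne' hc
      _ = _ := by rw [← mul_assoc, ← ENNReal.ofReal_mul (by positivity), ← mul_pow]; norm_num
  · have h2 := fd_refl (fun x => uu L x k) (fun l x => aa L x k l) (uu_fderiv hL hi k) p x
    have h := (uu_fderiv hL hi k x).sub h2
    refine h.congr_fderiv ?_
    simp only [← Finset.sum_sub_distrib, ← sub_smul, sub_neg_eq_add, Matrix.of_apply]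
  · have := add_pos (aa_pos hL hi x v hv) (aa_pos hL hi (p - x) v hv)
    simpa only [Matrix.of_apply, mul_add, add_mul, Finset.sum_add_distrib] using this
  · have m := mv_mem hL hi hc
    refine ⟨((1/2:ℝ) • mv L x + (1/2:ℝ) • mv L (-(p - x))) - ((1/2:ℝ) • mv L (-x) + (1/2:ℝ) • mv L (p - x)),
      sub_mem_sub (hc (m _) (m _) (by norm_num) (by norm_num) (by norm_num)) (hc (m _) (m _) (by norm_num) (by norm_num) (by norm_num)), ?_⟩
    simp only [uu]
    module
end Fin9
section Fin10
variable {n : ℕ} {L : Set (EuclideanSpace ℝ (Fin n))}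

theorem hs_nonneg (hL : IsCompact L) (h0 : 0 ∈ L) (x : EuclideanSpace ℝ (Fin n)) : 0 ≤ hs L x := by
  simpa using le_hs hL x 0 h0

theorem hs_add (hL : IsCompact L) (hn : L.Nonempty) (x y : EuclideanSpace ℝ (Fin n)) :
    hs L (x + y) ≤ hs L x + hs L y := by
  rw [hs_le_iff hL hn]
  intro z hz
  rw [inner_add_left]
  exact add_le_add (le_hs hL x z hz) (le_hs hL y z hz)

theorem hs_growth (hL : IsCompact L) (h0 : 0 ∈ interior L) : ∃ ρ : ℝ, 0 < ρ ∧ ∀ x, ρ * ‖x‖ ≤ hs L x := by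
  obtain ⟨ρ, hρ, hb⟩ := Metric.nhds_basis_closedBall.mem_iff.1 (mem_interior_iff_mem_nhds.1 h0)
  refine ⟨ρ, hρ, fun x => ?_⟩
  rcases eq_or_ne x 0 with rfl | hx
  · simpa using hs_nonneg hL (interior_subset h0) 0
  have hx' : 0 < ‖x‖ := norm_pos_iff.2 hx
  have := le_hs hL x ((ρ / ‖x‖) • x) (hb (by
    rw [mem_closedBall_zero_iff, norm_smul, Real.norm_of_nonneg (by positivity)]
    field_simp; rfl))
  rw [inner_smul_right, real_inner_self_eq_norm_sq] at this
  refine le_trans (le_of_eq ?_) this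
  field_simp

theorem uu_lower (hL : IsCompact L) (hi : (interior L).Nonempty) (hc : Convex ℝ L)
    (hbar : ∫ y in L, y = 0) (x : EuclideanSpace ℝ (Fin n)) :
    hs L x / 2 + hs L (-x) / 2 - 2 * (n * Real.log 2) ≤ ∑ k, x k * uu L x k := by
  have e : ∑ k, x k * uu L x k = ⟪x, mv L x⟫ + ⟪-x, mv L (-x)⟫ := by
    rw [inner_neg_left, ← sub_eq_add_neg, ← inner_sub_right, PiLp.inner_apply]
    refine Finset.sum_congr rfl fun k _ => by simp [uu, mul_comm]
  rw [e]
  linarith [mv_lower hL hi hc hbar x, mv_lower hL hi hc hbar (-x)]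

theorem partB0 (hL : IsCompact L) (h0 : 0 ∈ interior L) (hc : Convex ℝ L) (hbar : ∫ y in L, y = 0) :
    ENNReal.ofReal ((2 * Real.pi) ^ n) ≤
    ∫⁻ z : EuclideanSpace ℝ (Fin n) × EuclideanSpace ℝ (Fin n),
      ENNReal.ofReal (Real.exp (-(∑ k, z.1 k * uu L z.1 k + ∑ k, z.2 k * uu L z.2 k))) *
      ENNReal.ofReal |(Matrix.of fun k j => aa L z.1 k j + aa L z.2 k j : Matrix (Fin n) (Fin n) ℝ).det| := by
  have hi : (interior L).Nonempty := ⟨0, h0⟩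
  obtain ⟨R, r1, r2, r3⟩ := bounds hL hi
  obtain ⟨ρ, hρ, hg⟩ := hs_growth hL h0
  refine kup_main (fun k x => uu L x k) (fun k j x => aa L x k j) (fun k j l x => ct L k j l x - ct L k j l (-x))
    (fun k x v => fd_line _ _ x v (uu_fderiv hL hi k x)) (fun k j x v => fd_line _ _ x v (aa_fderiv hL hi k j x))
    (fun k => ?_) (fun k j => ?_) (fun k j l => ?_) (R + R) (fun k x => ?_) (fun k j x => ?_) (fun k j l x => ?_)
    (fun k j l x => ?_) (ρ / 2) (2 * (n * Real.log 2)) (by positivity) (fun x => ?_)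
  · exact continuous_iff_continuousAt.2 fun x => (uu_fderiv hL hi k x).continuousAt
  · exact continuous_iff_continuousAt.2 fun x => (aa_fderiv hL hi k j x).continuousAt
  · exact (ct_cont hL hi k j l).sub ((ct_cont hL hi k j l).comp continuous_neg)
  · exact (abs_sub _ _).trans (add_le_add (r1 _ _) (r1 _ _))
  · exact (abs_add_le _ _).trans (add_le_add (r2 _ _ _) (r2 _ _ _))
  · exact (abs_sub _ _).trans (add_le_add (r3 _ _ _ _) (r3 _ _ _ _))
  · simp only [ct_symm k j l]
  · have := uu_lower hL hi hc hbar x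
    have h1 := hg x
    have h2 := hs_nonneg hL (interior_subset h0) (-x)
    linarith

theorem shear (H : EuclideanSpace ℝ (Fin n) → ℝ≥0∞) (D : EuclideanSpace ℝ (Fin n) → EuclideanSpace ℝ (Fin n) → ℝ≥0∞)
    (hHm : Measurable H) (hDm : Measurable (fun z : EuclideanSpace ℝ (Fin n) × EuclideanSpace ℝ (Fin n) => D z.1 z.2))
    (hHt : ∀ p, H p ≠ ⊤) (B : ℝ≥0∞) (hB : ∀ p, ∫⁻ x, D x (p - x) ≤ B) :
    ∫⁻ z : EuclideanSpace ℝ (Fin n) × EuclideanSpace ℝ (Fin n), H (z.1 + z.2) * D z.1 z.2 ≤ (∫⁻ p, H p) * B := by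
  have hFm : Measurable (fun z : EuclideanSpace ℝ (Fin n) × EuclideanSpace ℝ (Fin n) => H (z.1 + z.2) * D z.1 z.2) :=
    (hHm.comp (measurable_fst.add measurable_snd)).mul hDm
  have hGm : Measurable (fun z : EuclideanSpace ℝ (Fin n) × EuclideanSpace ℝ (Fin n) => H z.2 * D z.1 (z.2 - z.1)) :=
    (hHm.comp measurable_snd).mul (hDm.comp (measurable_fst.prodMk (measurable_snd.sub measurable_fst)))
  calc ∫⁻ z : EuclideanSpace ℝ (Fin n) × EuclideanSpace ℝ (Fin n), H (z.1 + z.2) * D z.1 z.2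
      = ∫⁻ x, ∫⁻ y, H (x + y) * D x y := by
        rw [Measure.volume_eq_prod]; exact lintegral_prod _ hFm.aemeasurable
    _ = ∫⁻ x, ∫⁻ p, H p * D x (p - x) := by
        refine lintegral_congr fun x => ?_
        rw [← lintegral_sub_right_eq_self (fun y => H (x + y) * D x y) x]
        simp only [add_sub_cancel]
    _ = ∫⁻ p, ∫⁻ x, H p * D x (p - x) := lintegral_lintegral_swap hGm.aemeasurable
    _ ≤ ∫⁻ p, H p * B := by
        refine lintegral_mono fun p => ?_
        rw [lintegral_const_mul' _ _ (hHt p)]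
        gcongr
        exact hB p
    _ = _ := lintegral_mul_const _ hHm

theorem exp_bd (hL : IsCompact L) (h0 : 0 ∈ interior L) (hc : Convex ℝ L) (hbar : ∫ y in L, y = 0)
    (x y : EuclideanSpace ℝ (Fin n)) :
    Real.exp (-(∑ k, x k * uu L x k + ∑ k, y k * uu L y k)) ≤
      16 ^ n * Real.exp (-(max (hs L (x + y)) (hs L (-(x + y))) / 2)) := by
  have hi : (interior L).Nonempty := ⟨0, h0⟩
  have hn : L.Nonempty := hi.mono interior_subset
  have hnn := hs_nonneg hL (interior_subset h0)
  have e16 : (16:ℝ) ^ n = Real.exp (4 * (n * Real.log 2)) := by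
    rw [← Real.exp_log (show (0:ℝ) < 16 ^ n by positivity), Real.log_pow,
      show (16:ℝ) = 2 ^ 4 by norm_num, Real.log_pow]
    congr 1; push_cast; ring
  rw [e16, ← Real.exp_add, Real.exp_le_exp]
  have u1 := uu_lower hL hi hc hbar x
  have u2 := uu_lower hL hi hc hbar y
  have s1 := hs_add hL hn x y
  have s2 := hs_add hL hn (-x) (-y)
  rw [← neg_add] at s2
  have hm : max (hs L (x + y)) (hs L (-(x + y))) ≤ hs L x + hs L y + (hs L (-x) + hs L (-y)) :=
    max_le (by linarith [hnn (-x), hnn (-y)]) (by linarith [hnn x, hnn y])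
  linarith

theorem D_meas (hL : IsCompact L) (hi : (interior L).Nonempty) :
    Measurable (fun z : EuclideanSpace ℝ (Fin n) × EuclideanSpace ℝ (Fin n) =>
      ENNReal.ofReal |(Matrix.of fun k j => aa L z.1 k j + aa L z.2 k j : Matrix (Fin n) (Fin n) ℝ).det|) := by
  have hca : ∀ k j, Continuous fun x => aa L x k j := fun k j =>
    continuous_iff_continuousAt.2 fun x => (aa_fderiv hL hi k j x).continuousAt
  have : Continuous (fun z : EuclideanSpace ℝ (Fin n) × EuclideanSpace ℝ (Fin n) =>
      (Matrix.of fun k j => aa L z.1 k j + aa L z.2 k j : Matrix (Fin n) (Fin n) ℝ).det) := by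
    refine Continuous.matrix_det ?_
    refine continuous_matrix fun k j => ?_
    exact ((hca k j).comp continuous_fst).add ((hca k j).comp continuous_snd)
  exact (this.abs.measurable).ennreal_ofReal

theorem H_meas (hL : IsCompact L) (hn : L.Nonempty) :
    Measurable fun p => ENNReal.ofReal (16 ^ n) * ENNReal.ofReal (Real.exp (-(max (hs L p) (hs L (-p)) / 2))) := by
  have h1 := hs_meas hL hn
  have h2 : Measurable fun x => hs L (-x) := h1.comp measurable_neg
  exact (((h1.max h2).div_const 2).neg.exp.ennreal_ofReal).const_mul _

theorem partB (hL : IsCompact L) (h0 : 0 ∈ interior L) (hc : Convex ℝ L) (hbar : ∫ y in L, y = 0) :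
    ENNReal.ofReal ((2 * Real.pi) ^ n) ≤
    ENNReal.ofReal (128 ^ n) * volume L *
      ∫⁻ p, ENNReal.ofReal (Real.exp (-(max (hs L p) (hs L (-p)) / 2))) := by
  have hi : (interior L).Nonempty := ⟨0, h0⟩
  have hn : L.Nonempty := hi.mono interior_subset
  have h1 := shear (fun p => ENNReal.ofReal (16 ^ n) * ENNReal.ofReal (Real.exp (-(max (hs L p) (hs L (-p)) / 2))))
    (fun x y => ENNReal.ofReal |(Matrix.of fun k j => aa L x k j + aa L y k j : Matrix (Fin n) (Fin n) ℝ).det|)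
    (H_meas hL hn) (D_meas hL hi) (fun p => ENNReal.mul_ne_top ENNReal.ofReal_ne_top ENNReal.ofReal_ne_top)
    _ (inner_vol hL hi hc)
  have h2 : ENNReal.ofReal (128 ^ n) = ENNReal.ofReal (16 ^ n) * ENNReal.ofReal (8 ^ n) := by
    rw [← ENNReal.ofReal_mul (by positivity), ← mul_pow]; norm_num
  rw [lintegral_const_mul' _ _ ENNReal.ofReal_ne_top] at h1
  rw [h2]
  refine (partB0 hL h0 hc hbar).trans (le_trans (lintegral_mono fun z => ?_) (h1.trans (le_of_eq (by ring))))
  refine mul_le_mul_left ?_ _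
  rw [← ENNReal.ofReal_mul (by positivity)]
  exact ENNReal.ofReal_le_ofReal (exp_bd hL h0 hc hbar z.1 z.2)

theorem final (K : Set (EuclideanSpace ℝ (Fin n))) (hL : IsCompact L) (h0 : 0 ∈ interior L) (hc : Convex ℝ L)
    (hbar : ∫ y in L, y = 0) (hKL : ∀ x, x ∈ K ↔ ∀ y ∈ L, ⟪x, y⟫ ≤ 1) :
    ENNReal.ofReal ((1 / (1024 * Real.exp 1)) ^ n) * volume K ≤ volume (K ∩ -K) := by
  have hi : (interior L).Nonempty := ⟨0, h0⟩
  have hn : L.Nonempty := hi.mono interior_subset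
  have hnn := hs_nonneg hL (interior_subset h0)
  have hv0 := (vol_pos hi).ne'
  have hvt : volume L ≠ ⊤ := hL.measure_lt_top.ne
  have hm := hs_meas hL hn
  have hm2 : Measurable fun x => hs L (-x) := hm.comp measurable_neg
  have hset : ∀ t : ℝ, 0 < t → ∀ x, hs L x ≤ t ↔ t⁻¹ • x ∈ K := by
    intro t ht x
    rw [hs_le_iff hL hn, hKL]
    refine forall₂_congr fun y _ => ?_
    rw [real_inner_smul_left, inv_mul_le_iff₀ ht, mul_one]
  have A := partA hL hi hc hbar
  have B := partB hL h0 hc hbar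
  rw [layer (hs L) hm hnn K (fun t ht => by
    ext x; rw [mem_smul_set_iff_inv_smul_mem₀ ht.ne']; exact hset t ht x)] at A
  rw [layer (fun p => max (hs L p) (hs L (-p)) / 2) (by fun_prop) (fun x => by
      have := (hnn x).trans (le_max_left _ (hs L (-x))); positivity) ((2:ℝ) • (K ∩ -K)) (fun t ht => by
    ext x
    rw [mem_smul_set_iff_inv_smul_mem₀ ht.ne', mem_smul_set_iff_inv_smul_mem₀ two_ne_zero, smul_smul, ← mul_inv]
    simp only [mem_ofPred_eq, mem_inter_iff, Set.mem_neg]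
    rw [div_le_iff₀ two_pos, max_le_iff, hset _ (by positivity), hset _ (by positivity), smul_neg, mul_comm t]),
    Measure.addHaar_smul, finrank_euclideanSpace_fin, abs_of_pos (by positivity)] at B
  obtain ⟨g0, gt⟩ := gam_ne n
  set Γ := ∫⁻ t in Ioi (0:ℝ), ENNReal.ofReal (Real.exp (-t) * t ^ n)
  have hMt : volume L * Γ ≠ ⊤ := ENNReal.mul_ne_top hvt gt
  have hM0 : volume L * Γ ≠ 0 := mul_ne_zero hv0 g0
  rw [← ENNReal.mul_le_mul_iff_right hM0 hMt]
  have e1 : (1 / (1024 * Real.exp 1)) ^ n * (8 * Real.pi * Real.exp 1) ^ n = (1/128) ^ n * (1/2) ^ n * (2 * Real.pi) ^ n := by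
    rw [← mul_pow, ← mul_pow, ← mul_pow]; congr 1; field_simp; norm_num
  have e2 : ENNReal.ofReal ((1/128) ^ n * (1/2) ^ n) * (ENNReal.ofReal (128 ^ n) * ENNReal.ofReal (2 ^ n)) = 1 := by
    rw [← ENNReal.ofReal_mul (by positivity), ← ENNReal.ofReal_mul (by positivity), ← mul_pow, ← mul_pow, ← mul_pow]
    norm_num
  calc volume L * Γ * (ENNReal.ofReal ((1 / (1024 * Real.exp 1)) ^ n) * volume K)
      = ENNReal.ofReal ((1 / (1024 * Real.exp 1)) ^ n) * (volume L * (Γ * volume K)) := by ring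
    _ ≤ ENNReal.ofReal ((1 / (1024 * Real.exp 1)) ^ n) * ENNReal.ofReal ((8 * Real.pi * Real.exp 1) ^ n) := by gcongr
    _ = ENNReal.ofReal ((1/128) ^ n * (1/2) ^ n) * ENNReal.ofReal ((2 * Real.pi) ^ n) := by
        rw [← ENNReal.ofReal_mul (by positivity), e1, ENNReal.ofReal_mul (by positivity)]
    _ ≤ ENNReal.ofReal ((1/128) ^ n * (1/2) ^ n) * (ENNReal.ofReal (128 ^ n) * volume L * (Γ * (ENNReal.ofReal (2 ^ n) * volume (K ∩ -K)))) := by gcongr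
    _ = (ENNReal.ofReal ((1/128) ^ n * (1/2) ^ n) * (ENNReal.ofReal (128 ^ n) * ENNReal.ofReal (2 ^ n))) * (volume L * Γ * volume (K ∩ -K)) := by ring
    _ = _ := by rw [e2, one_mul]
end Fin10
/-- Rudelson's observation: if the Santaló point of `K` is at the origin (equivalently, the
barycenter of `K°` is at the origin), then `vol(K ∩ (−K)) ≥ cⁿ·vol(K)`. -/
theorem stmt14 :
    ∃ c : ℝ, 0 < c ∧ ∀ (n : ℕ),
      ∀ K : Set (EuclideanSpace ℝ (Fin n)),
        IsCompact K → Convex ℝ K → (0 : EuclideanSpace ℝ (Fin n)) ∈ interior K →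
        (∫ x in polarBody K, x) = 0 →
        ENNReal.ofReal (c ^ n) * volume K ≤ volume (K ∩ -K) := by
  refine ⟨1 / (1024 * Real.exp 1), by positivity, fun n K hK hKc hK0 hbar => ?_⟩
  have hcl : IsClosed (polarBody K) := by
    have : polarBody K = ⋂ y ∈ K, {x | ⟪x, y⟫ ≤ 1} := by
      ext x; simp [polarBody]
    rw [this]
    exact isClosed_biInter fun y _ => isClosed_le (by fun_prop) continuous_const
  have hconv : Convex ℝ (polarBody K) := by
    intro x hx y hy a b ha hb hab z hz
    rw [inner_add_left, real_inner_smul_left, real_inner_smul_left]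
    nlinarith [mul_le_mul_of_nonneg_left (hx z hz) ha, mul_le_mul_of_nonneg_left (hy z hz) hb]
  have hbd : Bornology.IsBounded (polarBody K) := by
    obtain ⟨r, hr, hb⟩ := Metric.nhds_basis_closedBall.mem_iff.1 (mem_interior_iff_mem_nhds.1 hK0)
    refine isBounded_iff_forall_norm_le.2 ⟨1 / r, fun x hx => ?_⟩
    rcases eq_or_ne x 0 with rfl | hx0
    · simp; positivity
    have hx' : 0 < ‖x‖ := norm_pos_iff.2 hx0
    have := hx ((r / ‖x‖) • x) (hb (by
      rw [mem_closedBall_zero_iff, norm_smul, Real.norm_of_nonneg (by positivity)]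
      field_simp; rfl))
    rw [inner_smul_right, real_inner_self_eq_norm_sq] at this
    rw [le_div_iff₀ hr]
    refine le_trans (le_of_eq ?_) this
    field_simp
  have h0 : (0 : EuclideanSpace ℝ (Fin n)) ∈ interior (polarBody K) := by
    obtain ⟨R0, hR0⟩ := hK.isBounded.exists_norm_le
    have hR : 0 < max R0 1 := lt_max_of_lt_right one_pos
    rw [mem_interior_iff_mem_nhds]
    refine Filter.mem_of_superset (Metric.closedBall_mem_nhds 0 (one_div_pos.2 hR)) fun x hx y hy => ?_
    rw [mem_closedBall_zero_iff] at hx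
    refine (real_inner_le_norm x y).trans ?_
    calc ‖x‖ * ‖y‖ ≤ 1 / max R0 1 * max R0 1 :=
          mul_le_mul hx ((hR0 y hy).trans (le_max_left _ _)) (norm_nonneg _) (by positivity)
      _ = 1 := by field_simp
  have hKL : ∀ x, x ∈ K ↔ ∀ y ∈ polarBody K, ⟪x, y⟫ ≤ 1 := by
    intro x
    refine ⟨fun hx y hy => ?_, fun h => ?_⟩
    · rw [real_inner_comm]; exact hy x hx
    · by_contra hx
      obtain ⟨f, u, h1, h2⟩ := geometric_hahn_banach_closed_point hKc hK.isClosed hx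
      have hu : 0 < u := by simpa using h1 0 (interior_subset hK0)
      set w := (InnerProductSpace.toDual ℝ (EuclideanSpace ℝ (Fin n))).symm f with hw
      have hf : ∀ y, ⟪w, y⟫ = f y := fun y => by simp [hw]
      have hmem : u⁻¹ • w ∈ polarBody K := by
        intro y hy
        rw [real_inner_smul_left, hf, inv_mul_le_iff₀ hu, mul_one]
        exact (h1 y hy).le
      have := h _ hmem
      rw [real_inner_comm, real_inner_smul_left, hf, inv_mul_le_iff₀ hu, mul_one] at this
      linarith
  exact final K (Metric.isCompact_of_isClosed_isBounded hcl hbd) h0 hconv hbar hKL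
end
end

section
/- Let f : ℝ^n → [0,∞) be a geometric log-concave integrable function with f(0) = ‖f‖_∞ = 1, let 1 ≤ k ≤ n−1, and let H be a k-dimensional linear subspace of ℝ^n. Then ∫_H f(x) dx = vol_k(K_k(f) ∩ H), where the integral is with respect to k-dimensional Lebesgue measure on H. -/
open MeasureTheory Metric Set
open scoped ENNReal RealInnerProductSpace Pointwise

noncomputable section

/-- `f` is a geometric log-concave integrable function: nonnegative, log-concave, centered,
attaining its maximum at the origin, with positive finite integral. -/
structure IsGeomLogConcave {n : ℕ} (f : EuclideanSpace ℝ (Fin n) → ℝ) : Prop where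
  nonneg : ∀ x, 0 ≤ f x
  logConcave : ∀ x y : EuclideanSpace ℝ (Fin n), ∀ a b : ℝ, 0 ≤ a → 0 ≤ b → a + b = 1 →
    f x ^ a * f y ^ b ≤ f (a • x + b • y)
  centered : (∫ x, f x • x) = (0 : EuclideanSpace ℝ (Fin n))
  maxAtZero : ∀ x, f x ≤ f 0
  integrable : Integrable f
  integral_pos : 0 < ∫ x, f x

/-- K. Ball's body `K_p(f) = { x : ∫₀^∞ r^(p−1) f(r x) dr ≥ f 0 / p }`. -/
def ballBody {n : ℕ} (p : ℝ) (f : EuclideanSpace ℝ (Fin n) → ℝ) :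
    Set (EuclideanSpace ℝ (Fin n)) :=
  {x | f 0 / p ≤ ∫ r in Set.Ioi (0:ℝ), r ^ (p - 1) * f (r • x)}

theorem geom_convex {n : ℕ} {f : EuclideanSpace ℝ (Fin n) → ℝ}
    (hf : IsGeomLogConcave f) (c : ℝ) : Convex ℝ {y | c ≤ f y} := by
  intro x hx y hy a b ha hb hab
  simp only [mem_ofPred_eq] at *
  rcases le_or_gt c 0 with hc | hc
  · exact hc.trans (hf.nonneg _)
  · calc c = c ^ a * c ^ b := by rw [← Real.rpow_add hc, hab, Real.rpow_one]
      _ ≤ f x ^ a * f y ^ b := by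
        have h1 := Real.rpow_le_rpow hc.le hx ha
        have h2 := Real.rpow_le_rpow hc.le hy hb
        have h3 : 0 ≤ c ^ a := Real.rpow_nonneg hc.le _
        have h4 : 0 ≤ c ^ b := Real.rpow_nonneg hc.le _
        exact mul_le_mul h1 h2 h4 (h3.trans h1)
      _ ≤ _ := hf.logConcave x y a b ha hb hab

theorem geom_lt_one {n : ℕ} {f : EuclideanSpace ℝ (Fin n) → ℝ}
    (hf : IsGeomLogConcave f) (hf0 : f 0 = 1) (x : EuclideanSpace ℝ (Fin n)) (hx : x ≠ 0) :
    ∃ r : ℝ, 0 < r ∧ f (r • x) < 1 := by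
  by_contra! hcon
  have h1 : ∀ r : ℝ, 0 ≤ r → 1 ≤ f (r • x) := by
    intro r hr
    rcases hr.eq_or_lt with h | h
    · rw [← h, zero_smul, hf0]
    · exact hcon r h
  -- a level set of positive volume
  have hsupp : 0 < volume (Function.support f) :=
    (integral_pos_iff_support_of_nonneg hf.nonneg hf.integrable).1 hf.integral_pos
  obtain ⟨m, hm⟩ : ∃ m : ℕ, volume {y | 1 / ((m : ℝ) + 1) ≤ f y} ≠ 0 := by
    by_contra! h0
    have h2 : volume (⋃ m : ℕ, {y | 1 / ((m : ℝ) + 1) ≤ f y}) = 0 := measure_iUnion_null h0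
    refine hsupp.ne' (measure_mono_null ?_ h2)
    intro y hy
    have hy' : 0 < f y := lt_of_le_of_ne (hf.nonneg y) (Ne.symm hy)
    obtain ⟨m, hm⟩ := exists_nat_one_div_lt hy'
    exact mem_iUnion.2 ⟨m, hm.le⟩
  set c : ℝ := 1 / ((m : ℝ) + 1) with hc
  have hcpos : 0 < c := by positivity
  have hc1 : c ≤ 1 := by
    rw [hc, div_le_one (by positivity)]
    have : (0:ℝ) ≤ m := by positivity
    linarith
  have hconv := geom_convex hf c
  have hfin : volume {y | c ≤ f y} < ∞ := hf.integrable.measure_ge_lt_top hcpos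
  have hint : (interior {y | c ≤ f y}).Nonempty := by
    by_contra hne
    rw [not_nonempty_iff_eq_empty] at hne
    refine hm (measure_mono_null ?_ (hconv.addHaar_frontier volume))
    rw [frontier, hne, sdiff_empty]
    exact subset_closure
  obtain ⟨y, hy⟩ := hint
  obtain ⟨ε, hε, hball⟩ := Metric.isOpen_iff.1 isOpen_interior y hy
  have hball' := hball.trans interior_subset
  have hxn : 0 < ‖x‖ := norm_pos_iff.2 hx
  set t : ℝ := ε / ‖x‖ with ht
  have htpos : 0 < t := by positivity
  let C : ℕ → EuclideanSpace ℝ (Fin n) := fun j => (1/2:ℝ) • y + ((j:ℝ) * t) • x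
  have hsub : ∀ j : ℕ, ball (C j) (ε/2) ⊆ {y | c ≤ f y} := by
    intro j z hz
    have hw : (2:ℝ) • z - (2 * ((j:ℝ) * t)) • x ∈ ball y ε := by
      rw [mem_ball, dist_eq_norm] at hz ⊢
      have : (2:ℝ) • z - (2 * ((j:ℝ) * t)) • x - y = (2:ℝ) • (z - C j) := by
        simp only [C]; module
      rw [this, norm_smul, Real.norm_of_nonneg (by norm_num)]
      linarith
    have hv : (2 * ((j:ℝ) * t)) • x ∈ {y | c ≤ f y} := hc1.trans (h1 _ (by positivity))
    have := hconv (hball' hw) hv (a := 1/2) (b := 1/2) (by norm_num) (by norm_num) (by norm_num)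
    convert this using 1
    module
  have hdisj : Pairwise (Function.onFun Disjoint fun j => ball (C j) (ε/2)) := by
    intro i j hij
    apply ball_disjoint_ball
    have : C i - C j = (((i:ℝ) - j) * t) • x := by simp only [C]; module
    rw [dist_eq_norm, this, norm_smul, Real.norm_eq_abs, abs_mul, abs_of_pos htpos, mul_assoc, ht,
      div_mul_cancel₀ _ hxn.ne']
    have : (1:ℝ) ≤ |(i:ℝ) - j| := by
      have h : (1:ℤ) ≤ |(i:ℤ) - j| := Int.one_le_abs (by omega)
      exact_mod_cast h
    nlinarith
  have hle : volume (⋃ j, ball (C j) (ε/2)) ≤ volume {y | c ≤ f y} :=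
    measure_mono (iUnion_subset hsub)
  rw [measure_iUnion hdisj (fun _ => measurableSet_ball)] at hle
  have : ∀ j, volume (ball (C j) (ε/2)) = volume (ball (0:EuclideanSpace ℝ (Fin n)) (ε/2)) :=
    fun j => Measure.addHaar_ball_center _ _ _
  simp_rw [this] at hle
  rw [ENNReal.tsum_const_eq_top_of_ne_zero (measure_ball_pos _ _ (by positivity)).ne'] at hle
  exact absurd hfin (by rw [top_le_iff.1 hle]; simp)

theorem geom_ray {n : ℕ} {f : EuclideanSpace ℝ (Fin n) → ℝ}
    (hf : IsGeomLogConcave f) (hf0 : f 0 = 1) (x : EuclideanSpace ℝ (Fin n)) (hx : x ≠ 0)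
    (m : ℕ) : IntegrableOn (fun r : ℝ => r ^ m * f (r • x)) (Ioi 0) := by
  obtain ⟨r₀, hr₀, hlt⟩ := geom_lt_one hf hf0 x hx
  have key : ∀ s r : ℝ, 0 < s → s ≤ r → f (r • x) ^ (s / r) ≤ f (s • x) := by
    intro s r hs hsr
    have hr : 0 < r := hs.trans_le hsr
    have h := hf.logConcave (r • x) 0 (s / r) (1 - s / r) (by positivity)
      (by rw [sub_nonneg, div_le_one hr]; exact hsr) (by ring)
    rw [hf0, Real.one_rpow, mul_one, smul_zero, add_zero, smul_smul, div_mul_cancel₀ _ hr.ne'] at h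
    exact h
  have hle1 : ∀ y, f y ≤ 1 := fun y => hf0 ▸ hf.maxAtZero y
  have hanti : AntitoneOn (fun r : ℝ => f (r • x)) (Ioi 0) := by
    intro s hs r hr hsr
    refine le_trans ?_ (key s r hs hsr)
    have := Real.rpow_le_rpow_of_exponent_ge' (hf.nonneg (r • x)) (hle1 _)
      (div_nonneg (le_of_lt hs) (le_of_lt hr)) ((div_le_one hr).2 hsr)
    simpa using this
  obtain ⟨q, hq0, hq1, hq⟩ : ∃ q : ℝ, 0 < q ∧ q < 1 ∧ f (r₀ • x) ≤ q :=
    ⟨max (f (r₀ • x)) (1/2), by positivity, max_lt hlt (by norm_num), le_max_left _ _⟩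
  set b : ℝ := - Real.log q / r₀ with hb
  have hbpos : 0 < b := div_pos (neg_pos.2 (Real.log_neg hq0 hq1)) hr₀
  have hbr : b * r₀ = - Real.log q := by rw [hb, div_mul_cancel₀ _ hr₀.ne']
  have hbound : ∀ r : ℝ, 0 < r → f (r • x) ≤ Real.exp (b * r₀) * Real.exp (-b * r) := by
    intro r hr
    rw [← Real.exp_add]
    rcases le_or_gt r₀ r with h | h
    · have h1 := (key r₀ r hr₀ h).trans hq
      have h2 := Real.rpow_le_rpow (Real.rpow_nonneg (hf.nonneg _) _) h1
        (show 0 ≤ r / r₀ by positivity)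
      rw [← Real.rpow_mul (hf.nonneg _), show r₀ / r * (r / r₀) = 1 by field_simp,
        Real.rpow_one] at h2
      refine h2.trans ?_
      rw [Real.rpow_def_of_pos hq0]
      apply Real.exp_le_exp.2
      have h3 : Real.log q * (r / r₀) = -b * r := by rw [hb]; field_simp
      rw [h3]
      nlinarith [mul_pos hbpos hr₀]
    · refine (hle1 _).trans (Real.one_le_exp ?_)
      nlinarith
  have hI := (integrableOn_rpow_mul_exp_neg_mul_rpow (p := 1) (s := m) (b := b)
    (by have : (0:ℝ) ≤ m := by positivity
        linarith) one_pos hbpos).const_mul (Real.exp (b * r₀))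
  refine Integrable.mono' hI ?_ ?_
  · refine AEStronglyMeasurable.mul (by fun_prop) ?_
    exact (aemeasurable_restrict_of_antitoneOn measurableSet_Ioi hanti).aestronglyMeasurable
  · filter_upwards [ae_restrict_mem measurableSet_Ioi] with r hr
    have hr' : (0:ℝ) < r := hr
    rw [Real.norm_of_nonneg (mul_nonneg (by positivity) (hf.nonneg _)), Real.rpow_natCast,
      Real.rpow_one]
    have := mul_le_mul_of_nonneg_left (hbound r hr) (show 0 ≤ r ^ m by positivity)
    linarith

open Measure in
theorem fiber_vol (m : ℕ) (J : ℝ) (hJ : 0 ≤ J) :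
    volumeIoiPow m {r : Ioi (0:ℝ) | r.1 ^ (m+1) ≤ (m+1) * J} = ENNReal.ofReal J := by
  rcases hJ.eq_or_lt with h | h
  · rw [← h]
    have : {r : Ioi (0:ℝ) | r.1 ^ (m+1) ≤ ((m:ℝ)+1) * 0} = ∅ := by
      ext r
      have := pow_pos r.2.out (m+1)
      simpa using this
    rw [this]; simp
  · have hpos : 0 < ((m:ℝ)+1) * J := by positivity
    let ρ : Ioi (0:ℝ) := ⟨(((m:ℝ)+1) * J) ^ (((m+1 : ℕ):ℝ)⁻¹), Real.rpow_pos_of_pos hpos _⟩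
    have hρ : ρ.1 ^ (m+1) = ((m:ℝ)+1) * J := Real.rpow_inv_natCast_pow hpos.le (by omega)
    have hset : {r : Ioi (0:ℝ) | r.1 ^ (m+1) ≤ ((m:ℝ)+1) * J} = Iic ρ := by
      ext r
      rw [mem_ofPred_eq, ← hρ, pow_le_pow_iff_left₀ r.2.out.le ρ.2.out.le (by omega)]
      rfl
    have hz : volumeIoiPow m {ρ} = 0 := by
      refine withDensity_absolutelyContinuous _ _ ?_
      rw [comap_subtype_coe_apply measurableSet_Ioi]
      simp
    rw [hset, ← measure_congr (Iio_ae_eq_Iic' hz), volumeIoiPow_apply_Iio, hρ]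
    congr 1
    field_simp

open Measure in
theorem core {E : Type*} [NormedAddCommGroup E] [NormedSpace ℝ E] [MeasurableSpace E]
    [BorelSpace E] [FiniteDimensional ℝ E] (μ : Measure E) [μ.IsAddHaarMeasure]
    (m : ℕ) (hm : Module.finrank ℝ E = m + 1) (f : E → ℝ) (hf : ∀ x, 0 ≤ f x)
    (hmeas : AEMeasurable f μ)
    (hint : ∀ x, x ≠ 0 → IntegrableOn (fun r : ℝ => r ^ m * f (r • x)) (Ioi 0)) :
    ∫⁻ x, ENNReal.ofReal (f x) ∂μ =
      μ {x | 1 / ((m:ℝ) + 1) ≤ ∫ r in Ioi (0:ℝ), r ^ m * f (r • x)} := by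
  have : Nontrivial E := Module.nontrivial_of_finrank_pos (R := ℝ) (by omega)
  set K := {x | 1 / ((m:ℝ) + 1) ≤ ∫ r in Ioi (0:ℝ), r ^ m * f (r • x)} with hK
  have hmp := μ.measurePreserving_homeomorphUnitSphereProd
  rw [hm, Nat.add_sub_cancel] at hmp
  have hemb : MeasurableEmbedding (homeomorphUnitSphereProd E) := Homeomorph.measurableEmbedding _
  have hmeas0 : MeasurableSet ({0}ᶜ : Set E) := (measurableSet_singleton _).compl
  let J : sphere (0:E) 1 → ℝ := fun θ => ∫ r in Ioi (0:ℝ), r ^ m * f (r • θ.1)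
  have hθ : ∀ θ : sphere (0:E) 1, θ.1 ≠ 0 := fun θ => ne_zero_of_mem_unit_sphere θ
  have hJ0 : ∀ θ, 0 ≤ J θ := fun θ => setIntegral_nonneg measurableSet_Ioi
    fun r hr => mul_nonneg (pow_nonneg (le_of_lt hr) _) (hf _)
  -- polar form of any integral
  have polar : ∀ g : E → ℝ≥0∞, ∫⁻ x, g x ∂μ =
      ∫⁻ p, g (p.2.1 • p.1.1) ∂(μ.toSphere.prod (volumeIoiPow m)) := by
    intro g
    have h0 : ∫⁻ x, g x ∂μ = ∫⁻ x in ({0}ᶜ : Set E), g x ∂μ := by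
      rw [restrict_compl_singleton]
    rw [h0, ← lintegral_subtype_comap hmeas0,
      ← hmp.lintegral_comp_emb hemb]
    refine lintegral_congr fun x => ?_
    have : ((homeomorphUnitSphereProd E).symm (homeomorphUnitSphereProd E x)).1 = x.1 := by
      rw [Homeomorph.symm_apply_apply]
    rw [homeomorphUnitSphereProd_symm_apply_coe] at this
    rw [this]
  have hF : AEMeasurable (fun p : sphere (0:E) 1 × Ioi (0:ℝ) => f (p.2.1 • p.1.1))
      (μ.toSphere.prod (volumeIoiPow m)) := by
    have h1 : AEMeasurable (fun x : ({0}ᶜ : Set E) => f x.1) (μ.comap (↑)) := by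
      refine AEMeasurable.comp_quasiMeasurePreserving hmeas ?_
      refine ⟨measurable_subtype_coe, ?_⟩
      rw [map_comap_subtype_coe hmeas0]
      exact Measure.restrict_le_self.absolutelyContinuous
    have h2 := (hmp.symm (homeomorphUnitSphereProd E).toMeasurableEquiv)
    have h3 := h1.comp_quasiMeasurePreserving h2.quasiMeasurePreserving
    exact h3
  have hinner : ∀ θ : sphere (0:E) 1,
      ∫⁻ r, ENNReal.ofReal (f (r.1 • θ.1)) ∂(volumeIoiPow m) = ENNReal.ofReal (J θ) := by
    intro θ
    rw [volumeIoiPow, lintegral_withDensity_eq_lintegral_mul_non_measurable₀ _ (by fun_prop)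
      (Filter.Eventually.of_forall fun _ => ENNReal.ofReal_lt_top)]
    simp only [Pi.mul_apply]
    rw [lintegral_subtype_comap measurableSet_Ioi
      (fun r : ℝ => ENNReal.ofReal (r ^ m) * ENNReal.ofReal (f (r • θ.1))),
      ofReal_integral_eq_lintegral_ofReal (hint θ.1 (hθ θ))]
    · refine setLIntegral_congr_fun measurableSet_Ioi fun r hr => ?_
      exact (ENNReal.ofReal_mul (pow_nonneg (le_of_lt hr) _)).symm
    · filter_upwards [ae_restrict_mem measurableSet_Ioi] with r hr
      exact mul_nonneg (pow_nonneg (le_of_lt hr) _) (hf _)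
  have hJm : AEMeasurable J μ.toSphere := by
    have h1 := (hF.ennreal_ofReal).lintegral_prod_right'
    simp only [hinner] at h1
    refine h1.ennreal_toReal.congr (Filter.Eventually.of_forall fun θ => ?_)
    exact ENNReal.toReal_ofReal (hJ0 θ)
  have hmem : ∀ p : sphere (0:E) 1 × Ioi (0:ℝ),
      p.2.1 • p.1.1 ∈ K ↔ p.2.1 ^ (m+1) ≤ ((m:ℝ)+1) * J p.1 := by
    rintro ⟨θ, s, hs⟩
    have hs' : (0:ℝ) < s := hs
    have h1 : ∫ r in Ioi (0:ℝ), r ^ m * f (r • s • θ.1) = J θ / s ^ (m+1) := by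
      have h2 := integral_comp_mul_right_Ioi (fun r : ℝ => r ^ m * f (r • θ.1)) 0 hs'
      rw [zero_mul] at h2
      have h3 : ∀ r : ℝ, r ^ m * f (r • s • θ.1) =
          (s ^ m)⁻¹ * ((r * s) ^ m * f ((r * s) • θ.1)) := by
        intro r
        rw [smul_smul, mul_pow]
        field_simp
      simp_rw [h3]
      rw [integral_const_mul, h2, smul_eq_mul]
      simp only [J]
      field_simp
      ring
    simp only [hK, mem_ofPred_eq, h1]
    rw [div_le_div_iff₀ (by positivity) (by positivity)]
    constructor <;> intro h <;> linarith
  have hnull : NullMeasurableSet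
      {p : sphere (0:E) 1 × Ioi (0:ℝ) | p.2.1 ^ (m+1) ≤ ((m:ℝ)+1) * J p.1}
      (μ.toSphere.prod (volumeIoiPow m)) := by
    refine nullMeasurableSet_le (by fun_prop) ?_
    exact (hJm.comp_fst).const_mul _
  have hL : ∫⁻ x, ENNReal.ofReal (f x) ∂μ = ∫⁻ θ, ENNReal.ofReal (J θ) ∂μ.toSphere := by
    rw [polar, lintegral_prod _ hF.ennreal_ofReal]
    exact lintegral_congr hinner
  have hR : μ K = (μ.toSphere.prod (volumeIoiPow m))
      {p : sphere (0:E) 1 × Ioi (0:ℝ) | p.2.1 ^ (m+1) ≤ ((m:ℝ)+1) * J p.1} := by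
    have h1 : μ K = μ.comap (Subtype.val : ({0}ᶜ : Set E) → E) (Subtype.val ⁻¹' K) := by
      rw [comap_subtype_coe_apply hmeas0, Subtype.image_preimage_coe, inter_comm,
        ← restrict_apply' hmeas0, restrict_compl_singleton]
    rw [h1, ← hmp.measure_preimage_emb hemb]
    congr 1
    ext x
    have : ((homeomorphUnitSphereProd E).symm (homeomorphUnitSphereProd E x)).1 = x.1 := by
      rw [Homeomorph.symm_apply_apply]
    rw [homeomorphUnitSphereProd_symm_apply_coe] at this
    have h2 := hmem (homeomorphUnitSphereProd E x)
    rw [this] at h2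
    exact h2
  rw [hL, hR, ← lintegral_indicator_one₀ hnull, lintegral_prod (indicator _ 1) (aemeasurable_one.indicator₀ hnull)]
  refine lintegral_congr fun θ => ?_
  rw [← fiber_vol m (J θ) (hJ0 θ), ← lintegral_indicator_one]
  · rfl
  · exact measurableSet_le (by fun_prop) (by fun_prop)

/-- For a geometric log-concave `f` with `f 0 = ‖f‖_∞ = 1`:
`∫_H f = vol_k(K_k(f) ∩ H)`, where `K_k(f)` is K. Ball's body. -/
theorem stmt16 (n : ℕ) (f : EuclideanSpace ℝ (Fin n) → ℝ)
    (hf : IsGeomLogConcave f) (hf0 : f 0 = 1)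
    (k : ℕ) (hk1 : 1 ≤ k) (hkn : k ≤ n - 1)
    (H : Submodule ℝ (EuclideanSpace ℝ (Fin n))) (hH : Module.finrank ℝ H = k) :
    (∫⁻ x in (H : Set (EuclideanSpace ℝ (Fin n))), ENNReal.ofReal (f x) ∂μH[(k : ℝ)]) =
      μH[(k : ℝ)] (ballBody k f ∩ (H : Set _)) := by
  obtain ⟨m, rfl⟩ : ∃ m, k = m + 1 := ⟨k - 1, by omega⟩
  have hHm : MeasurableSet (H : Set (EuclideanSpace ℝ (Fin n))) :=
    H.closed_of_finiteDimensional.measurableSet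
  have hiso : Isometry (Subtype.val : H → EuclideanSpace ℝ (Fin n)) := isometry_subtype_coe
  have hmap : Measure.map (Subtype.val : H → EuclideanSpace ℝ (Fin n)) μH[((m+1 : ℕ) : ℝ)] =
      (μH[((m+1 : ℕ) : ℝ)]).restrict (H : Set (EuclideanSpace ℝ (Fin n))) := by
    rw [hiso.map_hausdorffMeasure (Or.inl (by positivity))]
    simp
  have hemb : MeasurableEmbedding (Subtype.val : H → EuclideanSpace ℝ (Fin n)) :=
    MeasurableEmbedding.subtype_coe hHm
  haveI : (μH[((m+1 : ℕ) : ℝ)] : Measure H).IsAddHaarMeasure := by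
    have := isAddHaarMeasure_hausdorffMeasure (E := H)
    rwa [hH] at this
  rw [← hmap, hemb.lintegral_map, ← Measure.restrict_apply' hHm, ← hmap, hemb.map_apply]
  rw [core _ m hH (fun x : H => f x) (fun x => hf.nonneg _)]
  · congr 1
    ext x
    simp only [ballBody, mem_ofPred_eq, mem_preimage, hf0]
    push_cast
    simp only [add_sub_cancel_right, Real.rpow_natCast]
  · refine NullMeasurable.aemeasurable ?_
    refine measurable_of_Ici fun c => ?_
    exact ((geom_convex hf c).linear_preimage H.subtype).nullMeasurableSet _
  · intro x hx
    exact geom_ray hf hf0 x.1 (by simpa using hx) m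
end
end
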